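/- (Universal Models Theorem) Let Σ be a finite set consisting of FDs Σ_FD and UIDs Σ_UID that is closed under finite implication, let k ∈ ℕ, and let I₀ be a finite instance satisfying Σ_FD. Then there exists a finite superinstance I of I₀ that satisfies Σ and is k-sound for Σ, I₀, and the class of all Boolean CQs (and hence is a finite k-universal model). -/

import Mathlib

namespace FQA

/-- A relational signature: a finite set of relation names, each with an arity `≥ 1`. -/
structure Sig where
  Rel : Type
  rel_fin : Finite Rel
  ar : Rel → ℕ
  ar_pos : ∀ R, 1 ≤ ar R

/-- The positions of a signature: pairs of a relation and an index into its arity. -/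
abbrev Sig.Pos (σ : Sig) : Type := Σ R : σ.Rel, Fin (σ.ar R)

/-- A fact `R(a₁, …, a_{ar R})` with elements from `α`. -/
abbrev Fact (σ : Sig) (α : Type) : Type := Σ R : σ.Rel, Fin (σ.ar R) → α

/-- An instance is a set of facts. -/
abbrev Inst (σ : Sig) (α : Type) : Type := Set (Fact σ α)

variable {σ : Sig} {α β : Type}

/-- Element `a` occurs at position `p` in some fact of the instance `I`. -/
def occursAt (I : Inst σ α) (p : σ.Pos) (a : α) : Prop :=
  ∃ t : Fin (σ.ar p.1) → α, (⟨p.1, t⟩ : Fact σ α) ∈ I ∧ t p.2 = a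

/-- The active domain of an instance: the elements occurring in some fact. -/
def activeDom (I : Inst σ α) : Set α :=
  {a | ∃ F : Fact σ α, F ∈ I ∧ ∃ i, F.2 i = a}

/-- A unary inclusion dependency `src ⊆ dst` (nontrivial: `src ≠ dst`). -/
structure UID (σ : Sig) where
  src : σ.Pos
  dst : σ.Pos
  ne : src ≠ dst

/-- The reverse of a UID. -/
def UID.rev (τ : UID σ) : UID σ := ⟨τ.dst, τ.src, τ.ne.symm⟩

/-- An instance satisfies a UID if every element occurring at `src` also occurs at `dst`. -/
def satUID (I : Inst σ α) (τ : UID σ) : Prop :=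
  ∀ a, occursAt I τ.src a → occursAt I τ.dst a

/-- A functional dependency `R^L → R^r`, with `L` nonempty and `r ∉ L`. -/
structure FD (σ : Sig) where
  rel : σ.Rel
  lhs : Set (Fin (σ.ar rel))
  rhs : Fin (σ.ar rel)
  lhs_nonempty : lhs.Nonempty
  rhs_not_mem : rhs ∉ lhs

/-- An instance satisfies an FD if any two facts of `rel` agreeing on `lhs` agree on `rhs`. -/
def satFD (I : Inst σ α) (φ : FD σ) : Prop :=
  ∀ t u : Fin (σ.ar φ.rel) → α,
    (⟨φ.rel, t⟩ : Fact σ α) ∈ I → (⟨φ.rel, u⟩ : Fact σ α) ∈ I →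
    (∀ i ∈ φ.lhs, t i = u i) → t φ.rhs = u φ.rhs

/-- A Boolean conjunctive query: existentially quantified variables `Fin nv` and a
conjunction (list) of constant-free atoms, in which every variable occurs. -/
structure CQ (σ : Sig) where
  nv : ℕ
  atoms : List (Fact σ (Fin nv))
  vars_occur : ∀ x : Fin nv, ∃ A ∈ atoms, ∃ i, A.2 i = x

/-- The size of a CQ: its number of atoms. -/
def CQ.size (q : CQ σ) : ℕ := q.atoms.length

/-- A Boolean CQ holds in an instance iff there is a homomorphism (a match) from its
atoms to facts of the instance. -/
def satCQ (I : Inst σ α) (q : CQ σ) : Prop :=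
  ∃ h : Fin q.nv → α, ∀ A ∈ q.atoms, (⟨A.1, fun i => h (A.2 i)⟩ : Fact σ α) ∈ I

/-- An instance satisfies a set of UIDs and a set of FDs. -/
def satAllC (I : Inst σ ℕ) (Su : Set (UID σ)) (Sf : Set (FD σ)) : Prop :=
  (∀ τ ∈ Su, satUID I τ) ∧ (∀ φ ∈ Sf, satFD I φ)

/-- Unrestricted open-world entailment: every (finite or infinite) superinstance of `I₀`
satisfying the constraints satisfies `q`. -/
def unrEntails (I₀ : Inst σ ℕ) (Su : Set (UID σ)) (Sf : Set (FD σ)) (q : CQ σ) : Prop :=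
  ∀ I : Inst σ ℕ, I₀ ⊆ I → satAllC I Su Sf → satCQ I q

/-- Finite open-world entailment: every finite superinstance of `I₀` satisfying the
constraints satisfies `q`. -/
def finEntails (I₀ : Inst σ ℕ) (Su : Set (UID σ)) (Sf : Set (FD σ)) (q : CQ σ) : Prop :=
  ∀ I : Inst σ ℕ, I₀ ⊆ I → I.Finite → satAllC I Su Sf → satCQ I q

/-- A (nontrivial) UID is finitely implied by the constraints: it holds in every finite
instance satisfying them. -/
def finImpUID (Su : Set (UID σ)) (Sf : Set (FD σ)) (τ : UID σ) : Prop :=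
  ∀ I : Inst σ ℕ, I.Finite → satAllC I Su Sf → satUID I τ

/-- A (nontrivial) FD is finitely implied by the constraints: it holds in every finite
instance satisfying them. -/
def finImpFD (Su : Set (UID σ)) (Sf : Set (FD σ)) (φ : FD σ) : Prop :=
  ∀ I : Inst σ ℕ, I.Finite → satAllC I Su Sf → satFD I φ

end FQA

namespace FQA
section Biggs
open Classical

noncomputable def tog {S : Type} (N : ℕ) (s : S) (w : List S) : List S :=
  if w.head? = some s then w.tail else if w.length < N then s :: w else w

def Big (S : Type) (N : ℕ) : Type := {w : List S // w.IsChain (· ≠ ·) ∧ w.length ≤ N}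

theorem tog_spec {S : Type} (N : ℕ) (s : S) (w : List S) :
    (w = s :: tog N s w) ∨ (tog N s w = s :: w ∧ w.head? ≠ some s ∧ w.length < N) ∨
      (tog N s w = w ∧ w.head? ≠ some s ∧ N ≤ w.length) := by
  unfold tog
  split_ifs with h1 h2
  · left
    cases w with
    | nil => simp at h1
    | cons a l => simp at h1; simp [h1]
  · right; left; exact ⟨rfl, h1, h2⟩
  · right; right; exact ⟨rfl, h1, by omega⟩

theorem tog_ok {S : Type} {N : ℕ} (s : S) {w : List S}
    (hw : w.IsChain (· ≠ ·) ∧ w.length ≤ N) :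
    (tog N s w).IsChain (· ≠ ·) ∧ (tog N s w).length ≤ N := by
  rcases tog_spec N s w with h | ⟨h, h1, h2⟩ | ⟨h, _, _⟩
  · rw [h] at hw
    exact ⟨hw.1.tail, by have := hw.2; simp at this; omega⟩
  · rw [h]
    refine ⟨?_, by simp; omega⟩
    cases w with
    | nil => simp
    | cons a l =>
      simp at h1
      exact List.IsChain.cons_cons (fun e => h1 e.symm) hw.1
  · rw [h]; exact hw

theorem tog_tog {S : Type} {N : ℕ} (s : S) {w : List S}
    (hw : w.IsChain (· ≠ ·) ∧ w.length ≤ N) : tog N s (tog N s w) = w := by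
  rcases tog_spec N s w with h | ⟨h, h1, h2⟩ | ⟨h, _, _⟩
  · set v := tog N s w with hv
    have h3 : v.head? ≠ some s := by
      intro e
      rw [h] at hw
      cases hvv : v with
      | nil => simp [hvv] at e
      | cons a l =>
        rw [hvv] at hw e
        simp at e
        have := hw.1
        simp at this
        exact this.1 e.symm
    have h4 : v.length < N := by
      have := hw.2; rw [h] at this; simp at this; omega
    rw [h]
    simp [tog, h3, h4]
  · rw [h]; simp [tog]
  · rw [h, h]

noncomputable def tau {S : Type} {N : ℕ} (s : S) : Equiv.Perm (Big S N) :=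
  Function.Involutive.toPerm (fun w => ⟨tog N s w.1, tog_ok s w.2⟩)
    (fun w => Subtype.ext (tog_tog s w.2))

theorem tau_val {S : Type} {N : ℕ} (s : S) (w : Big S N) : (tau s w).1 = tog N s w.1 := rfl

theorem tau_tau {S : Type} {N : ℕ} (s : S) (w : Big S N) : tau s (tau s w) = w :=
  Subtype.ext (tog_tog s w.2)

def bnil {S : Type} {N : ℕ} : Big S N := ⟨[], by simp, by simp⟩

theorem bnil_val {S : Type} {N : ℕ} : (bnil : Big S N).1 = [] := rfl

instance {S : Type} [Finite S] {N : ℕ} : Finite (Big S N) :=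
  Set.Finite.to_subtype ((List.finite_length_le S N).subset (fun _ h => h.2))

theorem tau_mul_self {S : Type} {N : ℕ} (s : S) : (tau s : Equiv.Perm (Big S N)) * tau s = 1 :=
  Equiv.ext fun w => tau_tau s w

theorem tau_prod {S : Type} {N : ℕ} (w : List S) (hw : w.IsChain (· ≠ ·)) (hl : w.length ≤ N) :
    (((w.map (tau : S → Equiv.Perm (Big S N))).prod) bnil).1 = w := by
  induction w with
  | nil => simp [bnil_val]
  | cons a l ih =>
    have h1 := ih hw.tail (by simp at hl; omega)
    rw [List.map_cons, List.prod_cons, Equiv.Perm.mul_apply, tau_val, h1]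
    rcases tog_spec N a l with h | ⟨h, _⟩ | ⟨h, h2, h3⟩
    · exfalso
      rw [h] at hw
      simp at hw
    · exact h
    · simp at hl; omega

theorem tau_girth {S : Type} {N : ℕ} (w : List S) (hw : w.IsChain (· ≠ ·)) (hl : w.length ≤ N)
    (h0 : w ≠ []) : ((w.map (tau : S → Equiv.Perm (Big S N))).prod) ≠ 1 := by
  intro h
  have := tau_prod w hw hl
  rw [h] at this
  exact h0 this.symm

/-- toggling, with the pair `[] ↔ [s]` cut -/
noncomputable def cutf {S : Type} {N : ℕ} (s : S) (w : Big S N) : Big S N :=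
  if w.1 = [] ∨ w.1 = [s] then w else tau s w

theorem cutf_cutf {S : Type} {N : ℕ} (s : S) (w : Big S N) : cutf s (cutf s w) = w := by
  by_cases h : w.1 = [] ∨ w.1 = [s]
  · simp [cutf, h]
  · have h2 : ¬ ((tau s w).1 = [] ∨ (tau s w).1 = [s]) := by
      intro h3
      apply h
      have h4 : tog N s (tau s w).1 = w.1 := congrArg Subtype.val (tau_tau s w)
      rcases h3 with h3 | h3
      · rw [h3] at h4
        rw [← h4]
        by_cases hN : 0 < N <;> simp [tog, hN]
      · rw [h3] at h4
        rw [← h4]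
        simp [tog]
    simp [cutf, h, h2, tau_tau]

noncomputable def cut {S : Type} {N : ℕ} (s : S) : Equiv.Perm (Big S N) :=
  Function.Involutive.toPerm (cutf s) (cutf_cutf s)

theorem cut_apply {S : Type} {N : ℕ} (s : S) (w : Big S N) : cut s w = cutf s w := rfl

end Biggs

structure Env (σ : Sig) where
  le : σ.Pos → σ.Pos → Prop
  le_refl : ∀ p, le p p
  le_trans : ∀ {p q r}, le p q → le q r → le p r
  fd : ∀ R : σ.Rel, Fin (σ.ar R) → Fin (σ.ar R) → Prop
  fd_refl : ∀ R i, fd R i i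
  fd_trans : ∀ {R i j l}, fd R i j → fd R j l → fd R i l
  rank : σ.Pos → ℕ
  rank_le : ∀ {p q}, le p q → rank p ≤ rank q
  le_symm : ∀ {p q}, le p q → rank q ≤ rank p → le q p
  rank_fd : ∀ {R i j}, fd R i j → rank ⟨R, j⟩ ≤ rank ⟨R, i⟩
  fd_symm : ∀ {R i j}, fd R i j → rank ⟨R, i⟩ ≤ rank ⟨R, j⟩ → fd R j i

namespace Env
variable {σ : Sig} (E : Env σ)

def cset : Setoid σ.Pos where
  r p q := E.le p q ∧ E.le q p
  iseqv := ⟨fun p => ⟨E.le_refl p, E.le_refl p⟩, fun h => ⟨h.2, h.1⟩,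
    fun h1 h2 => ⟨E.le_trans h1.1 h2.1, E.le_trans h2.2 h1.2⟩⟩

def bset (R : σ.Rel) : Setoid (Fin (σ.ar R)) where
  r p q := E.fd R p q ∧ E.fd R q p
  iseqv := ⟨fun p => ⟨E.fd_refl R p, E.fd_refl R p⟩, fun h => ⟨h.2, h.1⟩,
    fun h1 h2 => ⟨E.fd_trans h1.1 h2.1, E.fd_trans h2.2 h1.2⟩⟩

noncomputable def crep (p : σ.Pos) : σ.Pos := (Quotient.mk E.cset p).out
noncomputable def brep {R : σ.Rel} (i : Fin (σ.ar R)) : Fin (σ.ar R) :=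
  (Quotient.mk (E.bset R) i).out

theorem crep_spec (p : σ.Pos) : E.le (E.crep p) p ∧ E.le p (E.crep p) :=
  @Quotient.mk_out _ E.cset p

theorem brep_spec {R : σ.Rel} (i : Fin (σ.ar R)) : E.fd R (E.brep i) i ∧ E.fd R i (E.brep i) :=
  @Quotient.mk_out _ (E.bset R) i

theorem crep_eq {p q : σ.Pos} (h1 : E.le p q) (h2 : E.le q p) : E.crep p = E.crep q := by
  unfold crep
  rw [Quotient.sound (s := E.cset) ⟨h1, h2⟩]

theorem brep_eq {R : σ.Rel} {i j : Fin (σ.ar R)} (h1 : E.fd R i j) (h2 : E.fd R j i) :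
    E.brep i = E.brep j := by
  unfold brep
  rw [Quotient.sound (s := E.bset R) ⟨h1, h2⟩]

theorem crep_crep (p : σ.Pos) : E.crep (E.crep p) = E.crep p :=
  E.crep_eq (E.crep_spec p).1 (E.crep_spec p).2

theorem brep_brep {R : σ.Rel} (i : Fin (σ.ar R)) : E.brep (E.brep i) = E.brep i :=
  E.brep_eq (E.brep_spec i).1 (E.brep_spec i).2

theorem fd_of_brep {R : σ.Rel} {i j : Fin (σ.ar R)} (h : E.brep i = E.brep j) : E.fd R i j :=
  E.fd_trans (E.brep_spec i).2 (h ▸ (E.brep_spec j).1)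

theorem rank_crep (p : σ.Pos) : E.rank (E.crep p) = E.rank p :=
  le_antisymm (E.rank_le (E.crep_spec p).1) (E.rank_le (E.crep_spec p).2)

theorem rank_brep {R : σ.Rel} (i : Fin (σ.ar R)) : E.rank ⟨R, E.brep i⟩ = E.rank ⟨R, i⟩ :=
  le_antisymm (E.rank_fd (E.brep_spec i).2) (E.rank_fd (E.brep_spec i).1)

end Env

instance {σ : Sig} : Finite σ.Rel := σ.rel_fin
instance {σ : Sig} {α : Type} [Finite α] : Finite (Fact σ α) := inferInstance
end FQA

namespace FQA
section M2
open Classical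

structure Ctx (σ : Sig) where
  E : Env σ
  α : Type
  I : Inst σ α
  pi : σ.Pos → Equiv.Perm α
  hpi : ∀ R (t : Fin (σ.ar R) → α), (⟨R, t⟩ : Fact σ α) ∈ I → ∀ j, pi ⟨R, j⟩ (t (E.brep j)) = t j
  n : ℕ

inductive Addr (σ : Sig) (X : Type) where
  | root : Addr σ X
  | gen : Addr σ X
  | imp : Addr σ X → σ.Pos → X → σ.Pos → Addr σ X
  | child : Addr σ X → (R : σ.Rel) → Fin (σ.ar R) → X → Fin (σ.ar R) → Addr σ X

namespace Addr
variable {σ : Sig} {X : Type}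
def trunc : ℕ → Addr σ X → Addr σ X
  | _, root => root
  | _, gen => gen
  | m, imp A c x c' => imp (trunc m A) c x c'
  | 0, child _ _ _ _ _ => gen
  | m+1, child A R b x b' => child (trunc m A) R b x b'
def cd : Addr σ X → ℕ
  | root => 0
  | gen => 0
  | imp A _ _ _ => cd A
  | child A _ _ _ _ => cd A + 1
def ht : Addr σ X → ℕ
  | root => 0
  | gen => 0
  | imp A _ _ _ => ht A + 1
  | child A _ _ _ _ => ht A + 1

theorem cd_trunc (m : ℕ) (A : Addr σ X) : (trunc m A).cd ≤ m := by
  induction A generalizing m with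
  | root => simp [trunc, cd]
  | gen => simp [trunc, cd]
  | imp A c x c' ih => simpa [trunc, cd] using ih m
  | child A R b x b' ih =>
    cases m with
    | zero => simp [trunc, cd]
    | succ m => simpa [trunc, cd] using ih m

theorem trunc_self (m : ℕ) (A : Addr σ X) (h : A.cd ≤ m) : trunc m A = A := by
  induction A generalizing m with
  | root => simp [trunc]
  | gen => simp [trunc]
  | imp A c x c' ih => simpa [trunc] using ih m h
  | child A R b x b' ih =>
    cases m with
    | zero => simp [cd] at h
    | succ m => simpa [trunc] using ih m (by simpa [cd] using h)

theorem trunc_root (m : ℕ) (A : Addr σ X) : trunc m A = root ↔ A = root := by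
  cases A <;> cases m <;> simp [trunc]

theorem finite_ht [Finite X] (d : ℕ) : {A : Addr σ X | A.ht ≤ d}.Finite := by
  induction d with
  | zero =>
    refine (Set.toFinite {root, gen}).subset ?_
    intro A hA
    cases A <;> simp [ht] at hA ⊢
  | succ d ih =>
    have h1 := (ih.prod (Set.finite_univ (α := σ.Pos × X × σ.Pos))).image
      (fun z => imp z.1 z.2.1 z.2.2.1 z.2.2.2)
    have h2 := (ih.prod (Set.finite_univ (α := Σ R : σ.Rel, Fin (σ.ar R) × X × Fin (σ.ar R)))).image
      (fun z => child z.1 z.2.1 z.2.2.1 z.2.2.2.1 z.2.2.2.2)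
    refine (((Set.toFinite {root, gen}).union h1).union h2).subset ?_
    intro A hA
    cases A with
    | root => simp
    | gen => simp
    | imp A c x c' =>
      left; right
      exact ⟨(A, c, x, c'), ⟨by simpa [ht] using hA, trivial⟩, rfl⟩
    | child A R b x b' =>
      right
      exact ⟨(A, ⟨R, b, x, b'⟩), ⟨by simpa [ht] using hA, trivial⟩, rfl⟩
end Addr
open Addr

namespace Ctx
variable {σ : Sig} (C : Ctx σ)

inductive Reach : σ.Pos → Prop
  | base (p : σ.Pos) (z : C.α) : occursAt C.I p z → Reach p
  | le (p q : σ.Pos) : C.E.le p q → Reach p → Reach q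
  | rel (R : σ.Rel) (i j : Fin (σ.ar R)) : Reach ⟨R, i⟩ → Reach ⟨R, j⟩

abbrev Crd : Type := C.α × Big σ.Pos (C.n + 1)
abbrev Ad : Type := Addr σ C.Crd
abbrev V : Type := C.α ⊕ (C.Ad × σ.Pos × C.Crd)

def I0B (R : σ.Rel) (b : Fin (σ.ar R)) (y : C.α) : Prop :=
  ∃ t, (⟨R, t⟩ : Fact σ C.α) ∈ C.I ∧ t b = y

noncomputable def lk (A : C.Ad) (p : σ.Pos) : C.Crd ≃ C.Crd :=
  Equiv.prodShear (C.pi p)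
    (fun y => if A = root ∧ C.I0B p.1 (C.E.brep p.2) y then cut p else tau p)

theorem lk_trunc (m : ℕ) (A : C.Ad) (p : σ.Pos) : C.lk (trunc m A) p = C.lk A p := by
  simp [lk, trunc_root]

def rankok : C.Ad → σ.Pos → Prop
  | root, _ => True
  | gen, _ => True
  | imp _ _ _ c', p => C.E.rank p = C.E.rank c'
  | child _ R _ _ b', p => C.E.rank p = C.E.rank ⟨R, b'⟩

theorem rankok_congr {A : C.Ad} {p q : σ.Pos} (h : C.E.rank p = C.E.rank q) (hp : C.rankok A p) :
    C.rankok A q := by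
  cases A <;> simp_all [rankok]

theorem rankok_trunc {m : ℕ} {A : C.Ad} {p : σ.Pos} (hp : C.rankok A p) :
    C.rankok (trunc m A) p := by
  cases A <;> cases m <;> simp_all [rankok, trunc]

def res (A : C.Ad) (R : σ.Rel) (b : Fin (σ.ar R)) (x : C.Crd) : Prop :=
  (A = root ∧ x.2 = bnil ∧ C.I0B R b x.1) ∨
    ∃ A0 b0 x0, A = child A0 R b0 x0 b ∧ x = (x0.1, bnil)

theorem res_trunc {m : ℕ} {A : C.Ad} {R : σ.Rel} {b : Fin (σ.ar R)} {x : C.Crd}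
    (h : C.res (trunc m A) R b x) : C.res A R b x := by
  rcases h with ⟨h1, h2⟩ | ⟨A0, b0, x0, h1, h2⟩
  · exact Or.inl ⟨(trunc_root m A).1 h1, h2⟩
  · right
    cases A with
    | root => simp [trunc] at h1
    | gen => simp [trunc] at h1
    | imp => simp [trunc] at h1
    | child A R' b' x' b'' =>
      cases m with
      | zero => simp [trunc] at h1
      | succ m =>
        simp only [trunc, child.injEq] at h1
        obtain ⟨h3, rfl, h4, h5, h6⟩ := h1
        simp only [heq_eq_eq] at h4 h6
        exact ⟨A, b', x', by rw [h6], by rw [h2, h5]⟩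

def want (z : C.α) (q : σ.Pos) : Prop := ∃ p, occursAt C.I p z ∧ C.E.le p q

def nn : C.Ad → σ.Pos → C.Crd → Prop
  | root, c, x => x.2 = bnil ∧ C.want x.1 c
  | gen, _, _ => False
  | imp _ _ x0 c', c, x => c = c' ∧ x = (x0.1, bnil)
  | child _ _ _ _ _, _, _ => False

noncomputable def own (A : C.Ad) (c : σ.Pos) (x : C.Crd) : C.V :=
  if C.nn A c x then
    match A with
    | imp A0 c0 x0 _ => .inr (A0, c0, x0)
    | _ => .inl x.1
  else .inr (A, c, x)

theorem own_nat {A : C.Ad} {c : σ.Pos} {x : C.Crd} (h : ¬ C.nn A c x) :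
    C.own A c x = .inr (A, c, x) := by
  unfold own; exact if_neg h

theorem own_root {c : σ.Pos} {x : C.Crd} (h : C.nn root c x) : C.own root c x = .inl x.1 := by
  unfold own; exact if_pos h

theorem own_imp {A0 : C.Ad} {c0 c' c : σ.Pos} {x0 x : C.Crd} (h : C.nn (imp A0 c0 x0 c') c x) :
    C.own (imp A0 c0 x0 c') c x = .inr (A0, c0, x0) := by
  unfold own; exact if_pos h

def vA : C.Ad → Prop
  | root => True
  | gen => True
  | imp A c _ c' => vA A ∧ C.rankok A c ∧ C.Reach c ∧ C.E.crep c = c ∧ C.E.crep c' = c' ∧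
      C.E.le c c' ∧ C.E.rank c < C.E.rank c'
  | child A R b x b' => vA A ∧ C.rankok A ⟨R, b⟩ ∧ C.E.brep b = b ∧ C.E.brep b' = b' ∧ b ≠ b' ∧
      C.Reach ⟨R, b⟩ ∧ ¬ C.res A R b x

theorem vA_trunc {m : ℕ} {A : C.Ad} (h : C.vA A) : C.vA (trunc m A) := by
  induction A generalizing m with
  | root => simp [trunc, vA]
  | gen => simp [trunc, vA]
  | imp A c x c' ih =>
    simp only [trunc, vA] at h ⊢
    exact ⟨ih h.1, C.rankok_trunc h.2.1, h.2.2⟩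
  | child A R b x b' ih =>
    cases m with
    | zero => simp [trunc, vA]
    | succ m =>
      simp only [trunc, vA] at h ⊢
      obtain ⟨h1, h2, h3, h4, h5, h6, h7⟩ := h
      exact ⟨ih h1, C.rankok_trunc h2, h3, h4, h5, h6, fun h => h7 (C.res_trunc h)⟩

/-- valid node at position p -/
def ok (A : C.Ad) (p : σ.Pos) : Prop :=
  C.vA A ∧ A.cd ≤ C.n + 1 ∧ C.rankok A p ∧ C.Reach p

theorem reach_brep {R : σ.Rel} {j : Fin (σ.ar R)} :
    C.Reach ⟨R, C.E.brep j⟩ ↔ C.Reach ⟨R, j⟩ := ⟨.rel R _ _, .rel R _ _⟩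

theorem reach_crep {p : σ.Pos} : C.Reach (C.E.crep p) ↔ C.Reach p :=
  ⟨.le _ _ (C.E.crep_spec p).1, .le _ _ (C.E.crep_spec p).2⟩

theorem ok_brep {A : C.Ad} {R : σ.Rel} {j : Fin (σ.ar R)} :
    C.ok A ⟨R, C.E.brep j⟩ ↔ C.ok A ⟨R, j⟩ := by
  unfold ok
  rw [reach_brep]
  constructor
  · rintro ⟨h1, h2, h3, h4⟩
    exact ⟨h1, h2, C.rankok_congr (C.E.rank_brep j) h3, h4⟩
  · rintro ⟨h1, h2, h3, h4⟩
    exact ⟨h1, h2, C.rankok_congr (C.E.rank_brep j).symm h3, h4⟩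

theorem ok_crep {A : C.Ad} {p : σ.Pos} : C.ok A (C.E.crep p) ↔ C.ok A p := by
  unfold ok
  rw [reach_crep]
  constructor
  · rintro ⟨h1, h2, h3, h4⟩
    exact ⟨h1, h2, C.rankok_congr (C.E.rank_crep p) h3, h4⟩
  · rintro ⟨h1, h2, h3, h4⟩
    exact ⟨h1, h2, C.rankok_congr (C.E.rank_crep p).symm h3, h4⟩

noncomputable def elemAt (A : C.Ad) (R : σ.Rel) (x : C.Crd) (j : Fin (σ.ar R)) : C.V :=
  C.own A (C.E.crep ⟨R, j⟩) (C.lk A ⟨R, j⟩ x)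

noncomputable def fact (A : C.Ad) (R : σ.Rel) (b : Fin (σ.ar R)) (x : C.Crd)
    (j : Fin (σ.ar R)) : C.V :=
  if C.E.brep j = b then C.elemAt A R x j
  else C.elemAt (child (trunc C.n A) R b x (C.E.brep j)) R (x.1, bnil) j

def J : Inst σ C.V :=
  {F | (∃ t, (⟨F.1, t⟩ : Fact σ C.α) ∈ C.I ∧ F.2 = fun j => .inl (t j)) ∨
    ∃ A b x, C.E.brep b = b ∧ C.ok A ⟨F.1, b⟩ ∧ ¬ C.res A F.1 b x ∧ F.2 = C.fact A F.1 b x}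

theorem elemAt_I0 {R : σ.Rel} {t : Fin (σ.ar R) → C.α} (h : (⟨R, t⟩ : Fact σ C.α) ∈ C.I)
    (j : Fin (σ.ar R)) : C.elemAt root R (t (C.E.brep j), bnil) j = .inl (t j) := by
  have h1 : C.lk root ⟨R, j⟩ (t (C.E.brep j), bnil) = (t j, bnil) := by
    have : C.I0B R (C.E.brep j) (t (C.E.brep j)) := ⟨t, h, rfl⟩
    have h2 : (cut ⟨R, j⟩ : Equiv.Perm (Big σ.Pos (C.n + 1))) bnil = bnil := by
      rw [cut_apply]; simp [cutf, bnil_val]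
    simp [lk, this, h2, C.hpi R t h]
  have h2 : C.want (t j) (C.E.crep ⟨R, j⟩) := ⟨⟨R, j⟩, ⟨t, h, rfl⟩, (C.E.crep_spec _).2⟩
  simp [elemAt, h1, own, nn, h2]

theorem ok_child {A : C.Ad} {R : σ.Rel} {b : Fin (σ.ar R)} {x : C.Crd} {j : Fin (σ.ar R)}
    (h0 : C.E.brep b = b) (h : C.ok A ⟨R, b⟩) (hr : ¬ C.res A R b x) (hj : C.E.brep j ≠ b) :
    C.ok (child (trunc C.n A) R b x (C.E.brep j)) ⟨R, j⟩ := by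
  obtain ⟨h1, h2, h3, h4⟩ := h
  refine ⟨⟨C.vA_trunc h1, C.rankok_trunc h3, h0, C.E.brep_brep j, fun h => hj h.symm, h4,
    fun h => hr (C.res_trunc h)⟩, ?_, (C.E.rank_brep j).symm, .rel R _ _ h4⟩
  simpa [cd] using cd_trunc _ _

theorem block {R : σ.Rel} {F : Fin (σ.ar R) → C.V} (hF : (⟨R, F⟩ : Fact σ C.V) ∈ C.J)
    (i : Fin (σ.ar R)) : ∃ A x, C.ok A ⟨R, i⟩ ∧
      ∀ j, C.E.brep j = C.E.brep i → F j = C.elemAt A R x j := by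
  rcases hF with ⟨t, h1, h2⟩ | ⟨A, b, x, h0, h1, h2, h3⟩
  · simp only at h1 h2
    refine ⟨root, (t (C.E.brep i), bnil), ⟨trivial, by simp [cd], trivial,
      .base _ (t i) ⟨t, h1, rfl⟩⟩, fun j hj => ?_⟩
    rw [← hj, elemAt_I0 C h1, h2]
  · simp only at h1 h2 h3
    by_cases hb : C.E.brep i = b
    · refine ⟨A, x, ?_, fun j hj => ?_⟩
      · rw [← ok_brep, hb]; exact h1
      · rw [h3, fact, if_pos (hj.trans hb)]
    · refine ⟨child (trunc C.n A) R b x (C.E.brep i), (x.1, bnil), C.ok_child h0 h1 h2 hb,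
        fun j hj => ?_⟩
      rw [h3, fact, if_neg (by rw [hj]; exact hb), hj]

theorem occ_iff (p : σ.Pos) (v : C.V) :
    occursAt C.J p v ↔ ∃ A x, C.ok A p ∧ v = C.own A (C.E.crep p) x := by
  obtain ⟨R, j⟩ := p
  constructor
  · rintro ⟨F, hF, rfl⟩
    obtain ⟨A, x, h1, h2⟩ := C.block hF j
    exact ⟨A, _, h1, h2 j rfl⟩
  · rintro ⟨A, x, h1, rfl⟩
    obtain ⟨y, rfl⟩ := (C.lk A ⟨R, j⟩).surjective x
    change occursAt C.J ⟨R, j⟩ (C.elemAt A R y j)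
    by_cases hr : C.res A R (C.E.brep j) y
    · rcases hr with ⟨rfl, h3, t, ht, h4⟩ | ⟨A0, b0, x0, rfl, rfl⟩
      · have : y = (t (C.E.brep j), bnil) := Prod.ext h4.symm h3
        rw [this, C.elemAt_I0 ht]
        exact ⟨fun j => .inl (t j), Or.inl ⟨t, ht, rfl⟩, rfl⟩
      · obtain ⟨⟨h2, h3, h4, h5, h6, h7, h8⟩, h9, h10, h11⟩ := h1
        simp only [cd, Nat.add_le_add_iff_right] at h9
        refine ⟨C.fact A0 R b0 x0, Or.inr ⟨A0, b0, x0, h4, ⟨h2, by omega, h3, h7⟩, h8, rfl⟩, ?_⟩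
        simp only [fact]
        rw [if_neg (fun e => h6 e.symm), trunc_self _ _ h9]
    · exact ⟨C.fact A R (C.E.brep j) y, Or.inr ⟨A, C.E.brep j, y, C.E.brep_brep j, C.ok_brep.2 h1, hr, rfl⟩, by
        simp [fact]⟩

theorem own_inj {A A' : C.Ad} {c : σ.Pos} {x x' : C.Crd} (h1 : C.vA A) (h2 : C.vA A')
    (h : C.own A c x = C.own A' c x') : A = A' ∧ x = x' := by
  by_cases h3 : C.nn A c x <;> by_cases h4 : C.nn A' c x'
  · cases A with
    | root =>
      cases A' with
      | root =>
        rw [own_root C h3, own_root C h4, Sum.inl.injEq] at h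
        exact ⟨rfl, Prod.ext h (h3.1.trans h4.1.symm)⟩
      | imp => rw [own_root C h3, own_imp C h4] at h; cases h
      | gen => exact h4.elim
      | child => exact h4.elim
    | imp A0 c0 x0 c' =>
      cases A' with
      | root => rw [own_root C h4, own_imp C h3] at h; cases h
      | imp A1 c1 x1 c1' =>
        rw [own_imp C h3, own_imp C h4] at h
        cases h
        obtain ⟨rfl, rfl⟩ := h3
        obtain ⟨rfl, rfl⟩ := h4
        exact ⟨rfl, rfl⟩
      | gen => exact h4.elim
      | child => exact h4.elim
    | gen => exact h3.elim
    | child => exact h3.elim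
  · rw [own_nat C h4] at h
    cases A with
    | root => rw [own_root C h3] at h; cases h
    | imp A0 c0 x0 c' =>
      rw [own_imp C h3] at h
      cases h
      obtain ⟨rfl, rfl⟩ := h3
      exact absurd h1.2.2.2.2.2.2 (lt_irrefl _)
    | gen => exact h3.elim
    | child => exact h3.elim
  · rw [own_nat C h3] at h
    cases A' with
    | root => rw [own_root C h4] at h; cases h
    | imp A0 c0 x0 c' =>
      rw [own_imp C h4] at h
      cases h
      obtain ⟨rfl, rfl⟩ := h4
      exact absurd h2.2.2.2.2.2.2 (lt_irrefl _)
    | gen => exact h4.elim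
    | child => exact h4.elim
  · rw [own_nat C h3, own_nat C h4] at h
    cases h
    exact ⟨rfl, rfl⟩

theorem J_uid {p q : σ.Pos} (h : C.E.le p q) {v : C.V} (hv : occursAt C.J p v) :
    occursAt C.J q v := by
  rw [occ_iff] at hv ⊢
  obtain ⟨A, x, ⟨h1, h2, h3, h4⟩, rfl⟩ := hv
  have h4' := Reach.le _ _ h h4
  by_cases hr : C.E.rank q ≤ C.E.rank p
  · have := C.E.crep_eq h (C.E.le_symm h hr)
    exact ⟨A, x, ⟨h1, h2, C.rankok_congr (le_antisymm (C.E.rank_le h) hr) h3, h4'⟩, by rw [this]⟩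
  · push Not at hr
    have h5 : C.E.le (C.E.crep p) (C.E.crep q) :=
      C.E.le_trans (C.E.crep_spec p).1 (C.E.le_trans h (C.E.crep_spec q).2)
    have h6 : C.E.rank (C.E.crep p) < C.E.rank (C.E.crep q) := by
      rwa [C.E.rank_crep, C.E.rank_crep]
    by_cases hn : C.nn A (C.E.crep p) x
    · cases A with
      | root =>
        obtain ⟨h7, p', h8, h9⟩ := hn
        have h10 : C.want x.1 (C.E.crep q) := ⟨p', h8, C.E.le_trans h9 h5⟩
        have h11 : C.want x.1 (C.E.crep p) := ⟨p', h8, h9⟩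
        refine ⟨root, x, ⟨h1, h2, trivial, h4'⟩, ?_⟩
        simp [own, nn, h7, h10, h11]
      | gen => exact hn.elim
      | child => exact hn.elim
      | imp A0 c0 x0 c' =>
        obtain ⟨h7, rfl⟩ := hn
        obtain ⟨g1, g2, g3, g4, g5, g6, g7⟩ := h1
        refine ⟨imp A0 c0 x0 (C.E.crep q), (x0.1, bnil), ⟨⟨g1, g2, g3, g4, C.E.crep_crep q, 
          C.E.le_trans g6 (h7 ▸ h5), g7.trans (h7 ▸ h6)⟩, h2, (C.E.rank_crep q).symm, h4'⟩, ?_⟩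
        simp [own, nn, h7]
    · refine ⟨imp A (C.E.crep p) x (C.E.crep q), (x.1, bnil), ⟨⟨h1, ?_, ?_, C.E.crep_crep p,
        C.E.crep_crep q, h5, h6⟩, h2, (C.E.rank_crep q).symm, h4'⟩, ?_⟩
      · exact C.rankok_congr (C.E.rank_crep p).symm h3
      · exact C.reach_crep.2 h4
      · rw [own_nat C hn, own_imp C ⟨rfl, rfl⟩]

theorem J_rufd {R : σ.Rel} {F F' : Fin (σ.ar R) → C.V} (hF : (⟨R, F⟩ : Fact σ C.V) ∈ C.J)
    (hF' : (⟨R, F'⟩ : Fact σ C.V) ∈ C.J) {i j : Fin (σ.ar R)} (hij : C.E.brep j = C.E.brep i)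
    (h : F i = F' i) : F j = F' j := by
  obtain ⟨A, x, h1, h2⟩ := C.block hF i
  obtain ⟨A', x', h1', h2'⟩ := C.block hF' i
  rw [h2 i rfl, h2' i rfl] at h
  obtain ⟨rfl, h3⟩ := C.own_inj h1.1 h1'.1 h
  rw [h2 j hij, h2' j hij, (C.lk A ⟨R, i⟩).injective h3]

noncomputable def rk : C.Ad → ℕ
  | root => 0
  | gen => 0
  | imp _ _ _ c' => C.E.rank c'
  | child _ R _ _ b' => C.E.rank ⟨R, b'⟩

theorem ht_le {Rm : ℕ} (hR : ∀ p, C.E.rank p ≤ Rm) {A : C.Ad} (h : C.vA A) :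
    A.ht ≤ A.cd * (Rm + 1) + C.rk A := by
  induction A with
  | root => simp [ht]
  | gen => simp [ht]
  | imp A c x c' ih =>
    obtain ⟨g1, g2, g3, g4, g5, g6, g7⟩ := h
    have := ih g1
    have h3 : C.rk A ≤ C.E.rank c := by
      cases A <;> simp_all [rk, rankok]
    simp only [ht, cd, rk]
    omega
  | child A R b x b' ih =>
    have := ih h.1
    have h3 : C.rk A ≤ Rm := by
      cases A <;> simp_all [rk]
    simp only [ht, cd, rk]
    ring_nf at this ⊢
    omega

theorem fin_vA [Finite C.α] : {A : C.Ad | C.vA A ∧ A.cd ≤ C.n + 1}.Finite := by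
  obtain ⟨Rm, hR⟩ : ∃ Rm, ∀ p, C.E.rank p ≤ Rm := by
    obtain ⟨B, hB⟩ := (Set.finite_range C.E.rank).bddAbove
    exact ⟨B, fun p => hB ⟨p, rfl⟩⟩
  refine (finite_ht ((C.n + 1) * (Rm + 1) + Rm)).subset ?_
  rintro A ⟨h1, h2⟩
  have h3 := C.ht_le hR h1
  have h4 : C.rk A ≤ Rm := by cases A <;> simp_all [rk]
  have h5 := Nat.mul_le_mul_right (Rm + 1) h2
  simp only [Set.mem_ofPred_eq]
  omega

/-- valid elements -/
def okV : C.V → Prop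
  | .inl _ => True
  | .inr (A, c, _) => C.ok A c ∧ C.E.crep c = c

theorem fin_okV [Finite C.α] : {v : C.V | C.okV v}.Finite := by
  refine ((Set.finite_range (Sum.inl : C.α → C.V)).union
    ((C.fin_vA.prod (Set.finite_univ (α := σ.Pos × C.Crd))).image Sum.inr)).subset ?_
  rintro (a | ⟨A, c, x⟩) h
  · left; simp
  · right; exact ⟨(A, c, x), ⟨⟨h.1.1, h.1.2.1⟩, trivial⟩, rfl⟩

theorem okV_own {A : C.Ad} {c : σ.Pos} {x : C.Crd} (h : C.ok A c) (hc : C.E.crep c = c) :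
    C.okV (C.own A c x) := by
  unfold own
  split_ifs with h1
  · cases A with
    | root => trivial
    | gen => trivial
    | child => trivial
    | imp A0 c0 x0 c' =>
      obtain ⟨⟨g1, g2, g3, g4, g5, g6, g7⟩, h2, h3, h4⟩ := h
      exact ⟨⟨g1, h2, g2, g3⟩, g4⟩
  · exact ⟨h, hc⟩

theorem okV_J {p : σ.Pos} {v : C.V} (h : occursAt C.J p v) : C.okV v := by
  obtain ⟨A, x, h1, rfl⟩ := (C.occ_iff p v).1 h
  exact C.okV_own (C.ok_crep.2 h1) (C.E.crep_crep p)

end Ctx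
end M2
end FQA

namespace FQA
section M2b
open Classical Addr
namespace Ctx
variable {σ : Sig} (C : Ctx σ)

structure Mod (M : Inst σ ℕ) (cc : C.α → ℕ) : Prop where
  hI : ∀ R (t : Fin (σ.ar R) → C.α), (⟨R, t⟩ : Fact σ C.α) ∈ C.I →
    (⟨R, fun j => cc (t j)⟩ : Fact σ ℕ) ∈ M
  hU : ∀ p q u, C.E.le p q → occursAt M p u → occursAt M q u

def wants : C.V → σ.Pos → Prop
  | .inl a, q => C.want a q
  | .inr (_, c, _), q => C.E.le c q

def compat (M : Inst σ ℕ) (v : C.V) (u : ℕ) : Prop := ∀ q, C.wants v q → occursAt M q u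

/-- the word of the coordinate starts with `p`, towards the H-node -/
def cV (A : C.Ad) (c : σ.Pos) (x : C.Crd) (p : σ.Pos) : Prop :=
  c = C.E.crep p ∧ x.2.1 = p :: ((C.lk A p).symm x).2.1

def cH (A : C.Ad) (R : σ.Rel) (b : Fin (σ.ar R)) (x : C.Crd) (i : Fin (σ.ar R)) : Prop :=
  C.E.brep i = b ∧ x.2.1 = ⟨R, i⟩ :: (C.lk A ⟨R, i⟩ x).2.1

mutual
def InfV : ℕ → C.V → Prop
  | 0, _ => False
  | _+1, .inl _ => True
  | m+1, .inr (A, c, x) => ∃ p, C.cV A c x p ∧ InfH m A p.1 (C.E.brep p.2) ((C.lk A p).symm x)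
def InfH : ℕ → C.Ad → (R : σ.Rel) → Fin (σ.ar R) → C.Crd → Prop
  | 0, _, _, _, _ => False
  | m+1, A, R, b, x =>
    (∃ A0 b0 x0, A = child A0 R b0 x0 b ∧ x = (x0.1, bnil) ∧ InfH m A0 R b0 x0) ∨
    (∃ i, C.cH A R b x i ∧ (C.nn A (C.E.crep ⟨R, i⟩) (C.lk A ⟨R, i⟩ x) ∨ InfV m (C.elemAt A R x i)))
end

mutual
def P (M : Inst σ ℕ) (cc : C.α → ℕ) : ℕ → C.V → ℕ → Prop
  | 0, v, u => C.compat M v u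
  | m+1, .inl a, u => C.compat M (.inl a) u ∧ u = cc a
  | m+1, .inr (A, c, x), u => C.compat M (.inr (A, c, x)) u ∧ (C.InfV (m+1) (.inr (A, c, x)) →
      ∀ p, C.cV A c x p → ∃ f, (⟨p.1, f⟩ : Fact σ ℕ) ∈ M ∧ f p.2 = u ∧
        Q M cc m A p.1 (C.E.brep p.2) ((C.lk A p).symm x) f)
def Q (M : Inst σ ℕ) (cc : C.α → ℕ) : ℕ → C.Ad → (R : σ.Rel) → Fin (σ.ar R) → C.Crd →
    (Fin (σ.ar R) → ℕ) → Prop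
  | 0, _, _, _, _, _ => True
  | m+1, A, R, b, x, f => C.InfH (m+1) A R b x →
    (∀ A0 b0 x0, A = child A0 R b0 x0 b → x = (x0.1, bnil) → Q M cc m A0 R b0 x0 f) ∧
    (∀ i, C.cH A R b x i → P M cc m (C.elemAt A R x i) (f i))
end

variable {C}

theorem cV_uniq {A : C.Ad} {c : σ.Pos} {x : C.Crd} {p q : σ.Pos} (h : C.cV A c x p)
    (h' : C.cV A c x q) : p = q := by
  have := h.2.symm.trans h'.2
  simp only [List.cons.injEq] at this
  exact this.1

theorem cH_uniq {A : C.Ad} {R : σ.Rel} {b : Fin (σ.ar R)} {x : C.Crd} {i j : Fin (σ.ar R)}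
    (h : C.cH A R b x i) (h' : C.cH A R b x j) : i = j := by
  have := h.2.symm.trans h'.2
  simp only [List.cons.injEq, Sigma.mk.injEq, heq_eq_eq, true_and] at this
  exact this.1

theorem nn_nil {A : C.Ad} {c : σ.Pos} {x : C.Crd} (h : C.nn A c x) : x.2 = bnil := by
  cases A with
  | root => exact h.1
  | imp => rw [h.2]
  | gen => exact h.elim
  | child => exact h.elim

theorem wants_own {A : C.Ad} {c : σ.Pos} {x : C.Crd} (h : C.vA A) :
    C.wants (C.own A c x) c := by
  by_cases hn : C.nn A c x
  · cases A with
    | root => rw [own_root C hn]; exact hn.2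
    | imp A0 c0 x0 c' =>
      rw [own_imp C hn]
      rw [hn.1]
      exact h.2.2.2.2.2.1
    | gen => exact hn.elim
    | child => exact hn.elim
  · rw [own_nat C hn]; exact C.E.le_refl c

theorem inf_mono (m : ℕ) : (∀ v, C.InfV m v → C.InfV (m+1) v) ∧
    (∀ A R b x, C.InfH m A R b x → C.InfH (m+1) A R b x) := by
  induction m with
  | zero => exact ⟨fun v h => by simp [InfV] at h, fun A R b x h => by simp [InfH] at h⟩
  | succ m ih =>
    constructor
    · rintro (a | ⟨A, c, x⟩) h
      · trivial
      · obtain ⟨p, h1, h2⟩ := h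
        exact ⟨p, h1, ih.2 _ _ _ _ h2⟩
    · intro A R b x h
      rcases h with ⟨A0, b0, x0, h1, h2, h3⟩ | ⟨i, h1, h2⟩
      · exact Or.inl ⟨A0, b0, x0, h1, h2, ih.2 _ _ _ _ h3⟩
      · exact Or.inr ⟨i, h1, h2.imp id (ih.1 _)⟩

theorem compat_of_P {M : Inst σ ℕ} {cc : C.α → ℕ} {m : ℕ} {v : C.V} {u : ℕ}
    (h : C.P M cc m v u) : C.compat M v u := by
  cases m with
  | zero => exact h
  | succ m =>
    rcases v with a | ⟨A, c, x⟩
    · exact h.1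
    · exact h.1

theorem PQ_mono (M : Inst σ ℕ) (cc : C.α → ℕ) (m : ℕ) :
    (∀ v u, C.P M cc (m+1) v u → C.P M cc m v u) ∧
    (∀ A R b x f, C.Q M cc (m+1) A R b x f → C.Q M cc m A R b x f) := by
  induction m with
  | zero => exact ⟨fun v u h => compat_of_P h, fun A R b x f h => trivial⟩
  | succ m ih =>
    constructor
    · rintro (a | ⟨A, c, x⟩) u h
      · exact h
      · refine ⟨h.1, fun h1 p hp => ?_⟩
        obtain ⟨f, h2, h3, h4⟩ := h.2 ((inf_mono _).1 _ h1) p hp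
        exact ⟨f, h2, h3, ih.2 _ _ _ _ _ h4⟩
    · intro A R b x f h h1
      obtain ⟨h2, h3⟩ := h ((inf_mono _).2 _ _ _ _ h1)
      exact ⟨fun A0 b0 x0 e1 e2 => ih.2 _ _ _ _ _ (h2 A0 b0 x0 e1 e2),
        fun i hi => ih.1 _ _ (h3 i hi)⟩

theorem P_of_not {M : Inst σ ℕ} {cc : C.α → ℕ} {m : ℕ} {v : C.V} {u : ℕ}
    (h : ¬ C.InfV m v) (hc : C.compat M v u) : C.P M cc m v u := by
  cases m with
  | zero => exact hc
  | succ m =>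
    rcases v with a | ⟨A, c, x⟩
    · exact absurd trivial h
    · exact ⟨hc, fun h1 => absurd h1 h⟩

theorem Q_of_not {M : Inst σ ℕ} {cc : C.α → ℕ} {m : ℕ} {A : C.Ad} {R : σ.Rel}
    {b : Fin (σ.ar R)} {x : C.Crd} {f} (h : ¬ C.InfH m A R b x) : C.Q M cc m A R b x f := by
  cases m with
  | zero => trivial
  | succ m => exact fun h1 => absurd h1 h

theorem inf_len (m : ℕ) : (∀ A c x, C.InfV m (.inr (A, c, x)) → x.2.1.length ≤ m) ∧
    (∀ A R b x, C.InfH m A R b x → x.2.1.length ≤ m) := by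
  induction m with
  | zero => exact ⟨fun A c x h => by simp [InfV] at h, fun A R b x h => by simp [InfH] at h⟩
  | succ m ih =>
    constructor
    · rintro A c x ⟨p, h1, h2⟩
      rw [h1.2]
      have := ih.2 _ _ _ _ h2
      simpa using this
    · rintro A R b x (⟨A0, b0, x0, h1, h2, h3⟩ | ⟨i, h1, h2⟩)
      · rw [h2]; simp [bnil_val]
      · rw [h1.2]
        by_cases hn : C.nn A (C.E.crep ⟨R, i⟩) (C.lk A ⟨R, i⟩ x)
        · rw [nn_nil hn]; simp [bnil_val]
        · rw [elemAt, own_nat C hn] at h2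
          rcases h2 with h2 | h2
          · exact absurd h2 hn
          · have := ih.1 _ _ _ h2
            simpa using this

/- truncation -/
def tv (k : ℕ) : C.V → C.V
  | .inl a => .inl a
  | .inr (A, c, x) => .inr (trunc k A, c, x)

theorem nn_trunc {k : ℕ} {A : C.Ad} {c : σ.Pos} {x : C.Crd} :
    C.nn (trunc k A) c x ↔ C.nn A c x := by
  cases A <;> cases k <;> simp [trunc, nn]

theorem own_trunc {k : ℕ} {A : C.Ad} {c : σ.Pos} {x : C.Crd} :
    C.own (trunc k A) c x = tv k (C.own A c x) := by
  by_cases hn : C.nn A c x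
  · have hn' := (nn_trunc (k := k)).2 hn
    cases A with
    | root => rw [own_root C hn]; simp only [trunc] at hn' ⊢; rw [own_root C hn']; rfl
    | imp A0 c0 x0 c' =>
      rw [own_imp C hn]; simp only [trunc] at hn' ⊢; rw [own_imp C hn']; rfl
    | gen => exact hn.elim
    | child => exact hn.elim
  · have hn' := (nn_trunc (k := k)).not.2 hn
    rw [own_nat C hn, own_nat C hn']; rfl

theorem elemAt_trunc {k : ℕ} {A : C.Ad} {R : σ.Rel} {x : C.Crd} {j : Fin (σ.ar R)} :
    C.elemAt (trunc k A) R x j = tv k (C.elemAt A R x j) := by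
  rw [elemAt, elemAt, lk_trunc, own_trunc]

theorem cV_trunc {k : ℕ} {A : C.Ad} {c : σ.Pos} {x : C.Crd} {p : σ.Pos} :
    C.cV (trunc k A) c x p ↔ C.cV A c x p := by simp only [cV, lk_trunc]

theorem cH_trunc {k : ℕ} {A : C.Ad} {R : σ.Rel} {b : Fin (σ.ar R)} {x : C.Crd}
    {i : Fin (σ.ar R)} : C.cH (trunc k A) R b x i ↔ C.cH A R b x i := by simp only [cH, lk_trunc]

theorem trunc_child {k : ℕ} {A A0 : C.Ad} {R : σ.Rel} {b b0 : Fin (σ.ar R)} {x0 : C.Crd} :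
    trunc (k+1) A = child A0 R b0 x0 b ↔ ∃ A1, A = child A1 R b0 x0 b ∧ A0 = trunc k A1 := by
  constructor
  · intro h
    cases A with
    | root => simp [trunc] at h
    | gen => simp [trunc] at h
    | imp => simp [trunc] at h
    | child A R' b' x' b'' =>
      simp only [trunc, child.injEq] at h
      obtain ⟨h3, rfl, h4, h5, h6⟩ := h
      simp only [heq_eq_eq] at h4 h6
      subst h4 h5 h6
      exact ⟨A, rfl, h3.symm⟩
  · rintro ⟨A1, rfl, rfl⟩
    rfl

theorem inf_trunc (m : ℕ) : ∀ k, m ≤ k → (∀ v, C.InfV m (tv k v) ↔ C.InfV m v) ∧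
    (∀ A R b x, C.InfH m (trunc k A) R b x ↔ C.InfH m A R b x) := by
  induction m with
  | zero => intro k _; simp [InfV, InfH]
  | succ m ih =>
    intro k hk
    constructor
    · rintro (a | ⟨A, c, x⟩)
      · simp [tv]
      · simp only [tv, InfV, cV_trunc, lk_trunc, (ih k (by omega)).2]
    · intro A R b x
      obtain ⟨k, rfl⟩ : ∃ k', k = k' + 1 := ⟨k - 1, by omega⟩
      simp only [InfH, cH_trunc, lk_trunc, nn_trunc, elemAt_trunc, (ih (k+1) (by omega)).1,
        trunc_child]
      refine or_congr ?_ Iff.rfl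
      constructor
      · rintro ⟨A0, b0, x0, ⟨A1, h1, rfl⟩, h2, h3⟩
        exact ⟨A1, b0, x0, h1, h2, ((ih k (by omega)).2 _ _ _ _).1 h3⟩
      · rintro ⟨A1, b0, x0, h1, h2, h3⟩
        exact ⟨_, b0, x0, ⟨A1, h1, rfl⟩, h2, ((ih k (by omega)).2 _ _ _ _).2 h3⟩

theorem compat_tv {M : Inst σ ℕ} {k : ℕ} {v : C.V} {u : ℕ} :
    C.compat M (tv k v) u ↔ C.compat M v u := by
  rcases v with a | ⟨A, c, x⟩ <;> rfl

theorem PQ_trunc (M : Inst σ ℕ) (cc : C.α → ℕ) (m : ℕ) : ∀ k, m ≤ k →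
    (∀ v u, C.P M cc m (tv k v) u ↔ C.P M cc m v u) ∧
    (∀ A R b x f, C.Q M cc m (trunc k A) R b x f ↔ C.Q M cc m A R b x f) := by
  induction m with
  | zero => intro k _; simp [P, Q, compat_tv]
  | succ m ih =>
    intro k hk
    constructor
    · rintro (a | ⟨A, c, x⟩) u
      · simp [tv]
      · have h1 := (inf_trunc (m+1) k hk).1 (.inr (A, c, x) : C.V)
        have h2 := compat_tv (M := M) (k := k) (v := (.inr (A, c, x) : C.V)) (u := u)
        simp only [tv] at h1 h2
        simp only [tv, P, cV_trunc, lk_trunc, (ih k (by omega)).2, h1, h2]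
    · intro A R b x f
      have h1 := (inf_trunc (m+1) k hk).2 A R b x
      obtain ⟨k, rfl⟩ : ∃ k', k = k' + 1 := ⟨k - 1, by omega⟩
      simp only [Q, cH_trunc, elemAt_trunc, (ih (k+1) (by omega)).1, h1, trunc_child]
      refine imp_congr Iff.rfl (and_congr ?_ Iff.rfl)
      constructor
      · intro h A1 b0 x0 e1 e2
        exact ((ih k (by omega)).2 _ _ _ _ _).1 (h _ b0 x0 ⟨A1, e1, rfl⟩ e2)
      · rintro h A0 b0 x0 ⟨A1, e1, rfl⟩ e2
        exact ((ih k (by omega)).2 _ _ _ _ _).2 (h _ b0 x0 e1 e2)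

theorem Mod.reach {M : Inst σ ℕ} {cc : C.α → ℕ} (hM : C.Mod M cc) {p : σ.Pos} (h : C.Reach p) :
    ∃ u, occursAt M p u := by
  induction h with
  | base p z h =>
    obtain ⟨t, h1, h2⟩ := h
    exact ⟨cc (t p.2), _, hM.hI _ _ h1, rfl⟩
  | le p q h _ ih =>
    obtain ⟨u, hu⟩ := ih
    exact ⟨u, hM.hU _ _ _ h hu⟩
  | rel R i j _ ih =>
    obtain ⟨u, t, h1, h2⟩ := ih
    exact ⟨t j, t, h1, rfl⟩

theorem compat_nat {M : Inst σ ℕ} {cc : C.α → ℕ} (hM : C.Mod M cc) {A : C.Ad} {c : σ.Pos}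
    {x : C.Crd} {u : ℕ} (h : occursAt M c u) : C.compat M (.inr (A, c, x)) u :=
  fun q hq => hM.hU _ _ _ hq h

theorem compat_cc {M : Inst σ ℕ} {cc : C.α → ℕ} (hM : C.Mod M cc) (a : C.α) :
    C.compat M (.inl a) (cc a) := by
  rintro q ⟨p, ⟨t, h1, h2⟩, h3⟩
  exact hM.hU _ _ _ h3 ⟨_, hM.hI _ _ h1, by simp [h2]⟩

theorem P_inl {M : Inst σ ℕ} {cc : C.α → ℕ} (hM : C.Mod M cc) (m : ℕ) (a : C.α) :
    C.P M cc m (.inl a) (cc a) := by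
  cases m with
  | zero => exact compat_cc hM a
  | succ m => exact ⟨compat_cc hM a, rfl⟩

theorem exist {M : Inst σ ℕ} {cc : C.α → ℕ} (hM : C.Mod M cc) (m : ℕ) :
    (∀ v, C.okV v → ∃ u, C.P M cc m v u) ∧
    (∀ A R b x, C.ok A ⟨R, b⟩ → ∃ f, (⟨R, f⟩ : Fact σ ℕ) ∈ M ∧ C.Q M cc m A R b x f) := by
  have hV0 : ∀ m v, C.okV v → ¬ C.InfV m v → ∃ u, C.P M cc m v u := by
    rintro m (a | ⟨A, c, x⟩) hv hi
    · exact ⟨cc a, P_inl hM m a⟩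
    · obtain ⟨u, hu⟩ := hM.reach hv.1.2.2.2
      exact ⟨u, P_of_not hi (compat_nat hM hu)⟩
  have hH0 : ∀ m A R b x, C.ok A ⟨R, b⟩ → ¬ C.InfH m A R b x →
      ∃ f, (⟨R, f⟩ : Fact σ ℕ) ∈ M ∧ C.Q M cc m A R b x f := by
    intro m A R b x h hi
    obtain ⟨u, f, h1, h2⟩ := hM.reach h.2.2.2
    exact ⟨f, h1, Q_of_not hi⟩
  induction m with
  | zero =>
    exact ⟨fun v hv => hV0 0 v hv (by simp [InfV]), fun A R b x h => hH0 0 A R b x h (by simp [InfH])⟩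
  | succ m ih =>
    constructor
    · intro v hv
      by_cases hi : C.InfV (m+1) v
      swap
      · exact hV0 _ v hv hi
      rcases v with a | ⟨A, c, x⟩
      · exact ⟨cc a, P_inl hM _ a⟩
      · obtain ⟨p, h1, h2⟩ := hi
        have hok : C.ok A ⟨p.1, C.E.brep p.2⟩ := by
          rw [ok_brep]
          have := hv.1
          rw [h1.1, ok_crep] at this
          exact this
        obtain ⟨f, h3, h4⟩ := ih.2 A p.1 (C.E.brep p.2) ((C.lk A p).symm x) hok
        refine ⟨f p.2, compat_nat hM ?_, fun _ q hq => ?_⟩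
        · rw [h1.1]
          exact hM.hU _ _ _ (C.E.crep_spec p).2 ⟨f, h3, rfl⟩
        · obtain rfl := cV_uniq h1 hq
          exact ⟨f, h3, rfl, h4⟩
    · intro A R b x h
      by_cases hi : C.InfH (m+1) A R b x
      swap
      · exact hH0 _ A R b x h hi
      rcases hi with ⟨A0, b0, x0, rfl, rfl, h3⟩ | ⟨i, h1, h2⟩
      · obtain ⟨⟨g1, g2, g3, g4, g5, g6, g7⟩, g8, g9, g10⟩ := h
        simp only [cd] at g8
        obtain ⟨f, h4, h5⟩ := ih.2 A0 R b0 x0 ⟨g1, by omega, g2, g6⟩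
        refine ⟨f, h4, fun _ => ⟨?_, ?_⟩⟩
        · intro A1 b1 x1 e1 e2
          simp only [child.injEq, heq_eq_eq, true_and, and_true] at e1
          obtain ⟨rfl, rfl, rfl⟩ := e1
          exact h5
        · intro i hi
          have := hi.2
          simp [bnil_val] at this
      · have hok : C.ok A ⟨R, i⟩ := by
          rw [← ok_brep, h1.1]; exact h
        obtain ⟨u, hu⟩ := ih.1 (C.elemAt A R x i)
          (C.okV_own (C.ok_crep.2 hok) (C.E.crep_crep _))
        have h4 := hM.hU _ _ _ (C.E.crep_spec _).1 (compat_of_P hu _ (wants_own hok.1))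
        obtain ⟨f, h5, h6⟩ := h4
        refine ⟨f, h5, fun _ => ⟨?_, ?_⟩⟩
        · intro A1 b1 x1 e1 e2
          have := h1.2
          rw [e2] at this
          simp [bnil_val] at this
        · intro j hj
          obtain rfl := cH_uniq h1 hj
          simp only at h6
          rwa [h6]

theorem lk_fst {A : C.Ad} {p : σ.Pos} {x : C.Crd} : (C.lk A p x).1 = C.pi p x.1 := rfl

theorem lk_snd {A : C.Ad} {p : σ.Pos} {x : C.Crd} : (C.lk A p x).2 =
    (if A = root ∧ C.I0B p.1 (C.E.brep p.2) x.1 then cut p else tau p) x.2 := rfl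

theorem lk_spec (A : C.Ad) (p : σ.Pos) (x : C.Crd) :
    x.2.1 = p :: (C.lk A p x).2.1 ∨ (C.lk A p x).2.1 = p :: x.2.1 ∨
    ((C.lk A p x).2.1 = x.2.1 ∧ (C.n + 1 ≤ x.2.1.length ∨
      (A = root ∧ C.I0B p.1 (C.E.brep p.2) x.1 ∧ (x.2.1 = [] ∨ x.2.1 = [p])))) := by
  rw [lk_snd]
  by_cases h : A = root ∧ C.I0B p.1 (C.E.brep p.2) x.1
  · rw [if_pos h, cut_apply]
    by_cases h2 : x.2.1 = [] ∨ x.2.1 = [p]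
    · right; right
      refine ⟨by rw [cutf, if_pos h2], Or.inr ⟨h.1, h.2, h2⟩⟩
    · rw [cutf, if_neg h2, tau_val]
      rcases tog_spec (C.n+1) p x.2.1 with h | ⟨h, _⟩ | ⟨h, _, h3⟩
      · exact Or.inl h
      · exact Or.inr (Or.inl h)
      · exact Or.inr (Or.inr ⟨h, Or.inl h3⟩)
  · rw [if_neg h, tau_val]
    rcases tog_spec (C.n+1) p x.2.1 with h | ⟨h, _⟩ | ⟨h, _, h3⟩
    · exact Or.inl h
    · exact Or.inr (Or.inl h)
    · exact Or.inr (Or.inr ⟨h, Or.inl h3⟩)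

/-- trichotomy for a link -/
theorem tri {A : C.Ad} {R : σ.Rel} {x : C.Crd} {j : Fin (σ.ar R)}
    (hr : ¬ (A = root ∧ x.2 = bnil ∧ C.I0B R (C.E.brep j) x.1)) :
    C.cH A R (C.E.brep j) x j ∨
    (C.elemAt A R x j = .inr (A, C.E.crep ⟨R, j⟩, C.lk A ⟨R, j⟩ x) ∧
      (C.cV A (C.E.crep ⟨R, j⟩) (C.lk A ⟨R, j⟩ x) ⟨R, j⟩ ∨
      (∀ m ≤ C.n, ¬ C.InfV m (C.elemAt A R x j) ∧ ¬ C.InfH m A R (C.E.brep j) x))) := by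
  have hnat : (C.lk A ⟨R, j⟩ x).2.1 ≠ [] →
      C.elemAt A R x j = .inr (A, C.E.crep ⟨R, j⟩, C.lk A ⟨R, j⟩ x) := fun h =>
    own_nat C fun h1 => h (by rw [nn_nil h1, bnil_val])
  rcases lk_spec A ⟨R, j⟩ x with h | h | ⟨h, h2 | ⟨h2, h3, h4⟩⟩
  · exact Or.inl ⟨rfl, h⟩
  · refine Or.inr ⟨hnat (by rw [h]; simp), Or.inl ⟨rfl, ?_⟩⟩
    rw [Equiv.symm_apply_apply]; exact h
  · have hh := hnat (by rw [h]; intro e; rw [e] at h2; simp at h2)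
    refine Or.inr ⟨hh, Or.inr fun m hm => ⟨fun h3 => ?_, fun h3 => ?_⟩⟩
    · rw [hh] at h3
      have := (inf_len m).1 _ _ _ h3
      rw [h] at this; omega
    · have := (inf_len m).2 _ _ _ _ h3
      omega
  · subst h2
    rcases h4 with h4 | h4
    · exact absurd ⟨rfl, Subtype.ext h4, h3⟩ hr
    · have hh := hnat (by rw [h, h4]; simp)
      refine Or.inr ⟨hh, Or.inr fun m hm => ⟨fun h5 => ?_, fun h5 => ?_⟩⟩
      · rw [hh] at h5
        cases m with
        | zero => simp [InfV] at h5
        | succ m =>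
          obtain ⟨p, ⟨_, h6⟩, _⟩ := h5
          rw [h, h4] at h6
          simp only [List.cons.injEq] at h6
          obtain ⟨rfl, h6⟩ := h6
          rw [Equiv.symm_apply_apply, h4] at h6
          simp at h6
      · cases m with
        | zero => simp [InfH] at h5
        | succ m =>
          rcases h5 with ⟨A0, b0, x0, e, _⟩ | ⟨i, ⟨_, h6⟩, _⟩
          · cases e
          · rw [h4] at h6
            simp only [List.cons.injEq, Sigma.mk.injEq, heq_eq_eq, true_and] at h6
            obtain ⟨rfl, h6⟩ := h6
            rw [h, h4] at h6
            simp at h6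

theorem claim1 {M : Inst σ ℕ} {cc : C.α → ℕ} (hM : C.Mod M cc) {A : C.Ad} {R : σ.Rel} {x : C.Crd}
    {j : Fin (σ.ar R)} (hr : ¬ (A = root ∧ x.2 = bnil ∧ C.I0B R (C.E.brep j) x.1))
    (hok : C.ok A ⟨R, j⟩) {m : ℕ} (hm : m ≤ C.n) {u : ℕ} (h : C.P M cc (m+1) (C.elemAt A R x j) u) :
    ∃ f, (⟨R, f⟩ : Fact σ ℕ) ∈ M ∧ f j = u ∧ C.Q M cc m A R (C.E.brep j) x f := by
  obtain ⟨f, hf, hfj⟩ := hM.hU _ _ _ (C.E.crep_spec _).1 (compat_of_P h _ (wants_own hok.1))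
  simp only at hf hfj
  by_cases hi : C.InfH m A R (C.E.brep j) x
  swap
  · exact ⟨f, hf, hfj, Q_of_not hi⟩
  rcases tri hr with h1 | ⟨h1, h2 | h2⟩
  · refine ⟨f, hf, hfj, ?_⟩
    cases m with
    | zero => trivial
    | succ m =>
      refine fun _ => ⟨?_, ?_⟩
      · intro A1 b1 x1 e1 e2
        have := h1.2
        rw [e2] at this
        simp [bnil_val] at this
      · intro i hii
        obtain rfl := cH_uniq h1 hii
        rw [hfj]
        exact (PQ_mono M cc _).1 _ _ ((PQ_mono M cc _).1 _ _ h)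
  · rw [h1] at h
    have h3 : C.InfV (m+1) (.inr (A, C.E.crep ⟨R, j⟩, C.lk A ⟨R, j⟩ x)) := by
      refine ⟨_, h2, ?_⟩
      rw [Equiv.symm_apply_apply]
      exact hi
    obtain ⟨f, g1, g2, g3⟩ := h.2 h3 _ h2
    rw [Equiv.symm_apply_apply] at g3
    exact ⟨f, g1, g2, g3⟩
  · exact absurd hi (h2 m hm).2

theorem claim3 {M : Inst σ ℕ} {cc : C.α → ℕ} (hM : C.Mod M cc) {A : C.Ad} {R : σ.Rel} {x : C.Crd}
    {j : Fin (σ.ar R)} (hr : ¬ (A = root ∧ x.2 = bnil ∧ C.I0B R (C.E.brep j) x.1))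
    {m : ℕ} (hm : m ≤ C.n) {f : Fin (σ.ar R) → ℕ} (hf : (⟨R, f⟩ : Fact σ ℕ) ∈ M)
    (h : C.Q M cc (m+1) A R (C.E.brep j) x f) : C.P M cc m (C.elemAt A R x j) (f j) := by
  have hc : occursAt M (C.E.crep ⟨R, j⟩) (f j) :=
    hM.hU _ _ _ (C.E.crep_spec _).2 ⟨f, hf, rfl⟩
  rcases tri hr with h1 | ⟨h1, h2 | h2⟩
  · by_cases hi : C.InfH (m+1) A R (C.E.brep j) x
    · exact (h hi).2 j h1
    · have h2 : ¬ C.nn A (C.E.crep ⟨R, j⟩) (C.lk A ⟨R, j⟩ x) := fun hn =>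
        hi (Or.inr ⟨j, h1, Or.inl hn⟩)
      have h3 : ¬ C.InfV m (C.elemAt A R x j) := fun hn => hi (Or.inr ⟨j, h1, Or.inr hn⟩)
      refine P_of_not h3 ?_
      rw [elemAt, own_nat C h2]
      exact compat_nat hM hc
  · rw [h1]
    cases m with
    | zero => exact compat_nat hM hc
    | succ m =>
      refine ⟨compat_nat hM hc, fun _ p hp => ?_⟩
      obtain rfl := cV_uniq h2 hp
      refine ⟨f, hf, rfl, ?_⟩
      rw [Equiv.symm_apply_apply]
      exact (PQ_mono M cc _).2 _ _ _ _ _ ((PQ_mono M cc _).2 _ _ _ _ _ h)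
  · refine P_of_not (h2 m hm).1 ?_
    rw [h1]
    exact compat_nat hM hc

theorem step {M : Inst σ ℕ} {cc : C.α → ℕ} (hM : C.Mod M cc) {m : ℕ} (hm : m + 3 ≤ C.n)
    {R : σ.Rel} {F : Fin (σ.ar R) → C.V} (hF : (⟨R, F⟩ : Fact σ C.V) ∈ C.J) (j : Fin (σ.ar R))
    {u : ℕ} (hu : C.P M cc (m+3) (F j) u) :
    ∃ f, (⟨R, f⟩ : Fact σ ℕ) ∈ M ∧ f j = u ∧ ∀ i, C.P M cc m (F i) (f i) := by
  rcases hF with ⟨t, h1, h2⟩ | ⟨A, b, x, hb, h1, h2, h3⟩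
  · have h2' : F = fun j => .inl (t j) := h2
    clear h2
    rw [h2'] at hu ⊢
    exact ⟨_, hM.hI _ _ h1, hu.2.symm, fun i => P_inl hM m _⟩
  · have h3' : F = C.fact A R b x := h3
    clear h3
    rw [h3'] at hu ⊢
    change C.ok A ⟨R, b⟩ at h1
    change ¬ C.res A R b x at h2
    have hQ : ∃ f, (⟨R, f⟩ : Fact σ ℕ) ∈ M ∧ f j = u ∧ C.Q M cc (m+1) A R b x f := by
      by_cases hj : C.E.brep j = b
      · subst hj
        rw [fact, if_pos rfl] at hu
        obtain ⟨f, g1, g2, g3⟩ := claim1 hM (fun h => h2 (Or.inl h)) (C.ok_brep.1 h1)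
          (m := m+2) (by omega) hu
        exact ⟨f, g1, g2, (PQ_mono M cc _).2 _ _ _ _ _ g3⟩
      · rw [fact, if_neg hj] at hu
        obtain ⟨f, g1, g2, g3⟩ := claim1 hM (fun h => by cases h.1) (C.ok_child hb h1 h2 hj)
          (m := m+2) (by omega) hu
        refine ⟨f, g1, g2, ?_⟩
        rw [← (PQ_trunc M cc (m+1) C.n (by omega)).2]
        by_cases hi : C.InfH (m+1) (trunc C.n A) R b x
        · exact (g3 (Or.inl ⟨_, _, _, rfl, rfl, hi⟩)).1 _ _ _ rfl rfl
        · exact Q_of_not hi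
    obtain ⟨f, g1, g2, g3⟩ := hQ
    refine ⟨f, g1, g2, fun i => ?_⟩
    by_cases hi : C.E.brep i = b
    · subst hi
      rw [fact, if_pos rfl]
      exact claim3 hM (fun h => h2 (Or.inl h)) (by omega) g1 g3
    · rw [fact, if_neg hi]
      refine claim3 hM (fun h => by cases h.1) (by omega) g1 ?_
      refine fun _ => ⟨?_, ?_⟩
      · intro A1 b1 x1 e1 e2
        simp only [child.injEq, heq_eq_eq, true_and, and_true] at e1
        obtain ⟨rfl, rfl, rfl⟩ := e1
        rw [(PQ_trunc M cc m C.n (by omega)).2]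
        exact (PQ_mono M cc _).2 _ _ _ _ _ g3
      · intro i' hi'
        have := hi'.2
        simp [bnil_val] at this

end Ctx
end M2b
end FQA

namespace FQA
section M3
open Classical

structure Base {σ : Sig} (E : Env σ) {α : Type} (I : Inst σ α) (n : ℕ) where
  V : Type
  fin : Finite V
  J : Inst σ V
  e : α → V
  e_inj : Function.Injective e
  eJ : ∀ R (t : Fin (σ.ar R) → α), (⟨R, t⟩ : Fact σ α) ∈ I → (⟨R, fun j => e (t j)⟩ : Fact σ V) ∈ J
  uid : ∀ p q v, E.le p q → occursAt J p v → occursAt J q v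
  rufd : ∀ {R : σ.Rel} {i j : Fin (σ.ar R)}, E.brep i = E.brep j → ∀ {F F' : Fin (σ.ar R) → V},
    (⟨R, F⟩ : Fact σ V) ∈ J → (⟨R, F'⟩ : Fact σ V) ∈ J → F i = F' i → F j = F' j
  sim : ∀ (M : Inst σ ℕ) (cc : α → ℕ),
    (∀ R (t : Fin (σ.ar R) → α), (⟨R, t⟩ : Fact σ α) ∈ I →
      (⟨R, fun j => cc (t j)⟩ : Fact σ ℕ) ∈ M) →
    (∀ p q u, E.le p q → occursAt M p u → occursAt M q u) →
    ∃ S : ℕ → V → ℕ → Prop, (∀ m v u, S (m+1) v u → S m v u) ∧ (∀ m v, ∃ u, S m v u) ∧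
      (∀ m < n, ∀ R (F : Fin (σ.ar R) → V), (⟨R, F⟩ : Fact σ V) ∈ J → ∀ j u, S (m+1) (F j) u →
        ∃ f, (⟨R, f⟩ : Fact σ ℕ) ∈ M ∧ f j = u ∧ ∀ i, S m (F i) (f i)) ∧
      (∀ m a, S m (e a) (cc a)) ∧ (∀ m a u, S (m+1) (e a) u → u = cc a)

theorem exists_pi {σ : Sig} (E : Env σ) {α : Type} [Finite α] (I : Inst σ α)
    (hfd : ∀ R i j, E.fd R i j → ∀ t u : Fin (σ.ar R) → α, (⟨R, t⟩ : Fact σ α) ∈ I →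
      (⟨R, u⟩ : Fact σ α) ∈ I → t i = u i → t j = u j) (R : σ.Rel) (j : Fin (σ.ar R)) :
    ∃ π : Equiv.Perm α, ∀ t : Fin (σ.ar R) → α, (⟨R, t⟩ : Fact σ α) ∈ I →
      π (t (E.brep j)) = t j := by
  have := Fintype.ofFinite α
  let p : α → Prop := fun y => ∃ t : Fin (σ.ar R) → α, (⟨R, t⟩ : Fact σ α) ∈ I ∧ t (E.brep j) = y
  let q : α → Prop := fun y => ∃ t : Fin (σ.ar R) → α, (⟨R, t⟩ : Fact σ α) ∈ I ∧ t j = y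
  let f : {y // p y} → {y // q y} := fun y => ⟨y.2.choose j, _, y.2.choose_spec.1, rfl⟩
  have hf : Function.Bijective f := by
    constructor
    · intro y z h
      have h1 : y.2.choose j = z.2.choose j := congrArg Subtype.val h
      have h2 := hfd R _ _ (E.brep_spec j).2 _ _ y.2.choose_spec.1 z.2.choose_spec.1 h1
      rw [y.2.choose_spec.2, z.2.choose_spec.2] at h2
      exact Subtype.ext h2
    · rintro ⟨y, t, ht, rfl⟩
      have hp : p (t (E.brep j)) := ⟨t, ht, rfl⟩
      refine ⟨⟨_, hp⟩, Subtype.ext ?_⟩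
      exact hfd R _ _ (E.brep_spec j).1 _ _ hp.choose_spec.1 ht hp.choose_spec.2
  refine ⟨(Equiv.ofBijective f hf).extendSubtype, fun t ht => ?_⟩
  have hp : p (t (E.brep j)) := ⟨t, ht, rfl⟩
  rw [Equiv.extendSubtype_apply_of_mem _ _ hp]
  exact hfd R _ _ (E.brep_spec j).1 _ _ hp.choose_spec.1 ht hp.choose_spec.2

theorem exists_base {σ : Sig} (E : Env σ) {α : Type} [Finite α] (I : Inst σ α)
    (hfd : ∀ R i j, E.fd R i j → ∀ t u : Fin (σ.ar R) → α, (⟨R, t⟩ : Fact σ α) ∈ I →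
      (⟨R, u⟩ : Fact σ α) ∈ I → t i = u i → t j = u j) (n : ℕ) : Nonempty (Base E I n) := by
  choose pi hpi using exists_pi E I hfd
  let C : Ctx σ := ⟨E, α, I, fun p => pi p.1 p.2, fun R t h j => hpi R j t h, 3 * n⟩
  have : Finite C.α := ‹Finite α›
  have hocc : ∀ p (v : {v : C.V // C.okV v}), occursAt
      ({F | (⟨F.1, fun i => (F.2 i).1⟩ : Fact σ C.V) ∈ C.J} : Inst σ {v : C.V // C.okV v}) p v ↔
      occursAt C.J p v.1 := by
    intro p v
    constructor
    · rintro ⟨t, h1, h2⟩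
      exact ⟨_, h1, congrArg _ h2⟩
    · rintro ⟨t, h1, h2⟩
      exact ⟨fun i => ⟨t i, C.okV_J (p := ⟨p.1, i⟩) ⟨t, h1, rfl⟩⟩, h1, Subtype.ext h2⟩
  refine ⟨⟨{v : C.V // C.okV v}, C.fin_okV, {F | (⟨F.1, fun i => (F.2 i).1⟩ : Fact σ C.V) ∈ C.J},
    fun a => ⟨.inl a, trivial⟩, ?_, ?_, ?_, ?_, ?_⟩⟩
  · intro a b h
    exact Sum.inl_injective (congrArg Subtype.val h)
  · intro R t h
    exact Or.inl ⟨t, h, rfl⟩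
  · intro p q v h h1
    rw [hocc] at h1 ⊢
    exact C.J_uid h h1
  · intro R i j hij F F' hF hF' h
    exact Subtype.ext (C.J_rufd hF hF' hij.symm (congrArg Subtype.val h))
  · intro M cc h1 h2
    have hM : C.Mod M cc := ⟨h1, h2⟩
    refine ⟨fun m v u => C.P M cc (3 * m) v.1 u, ?_, ?_, ?_, ?_, ?_⟩
    · intro m v u h
      have h3 : C.P M cc (3 * m + 1 + 1 + 1) v.1 u := h
      have h4 := (Ctx.PQ_mono (C := C) M cc _).1 _ _ h3
      have h5 := (Ctx.PQ_mono (C := C) M cc _).1 _ _ h4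
      exact (Ctx.PQ_mono (C := C) M cc _).1 _ _ h5
    · intro m v
      exact (Ctx.exist hM _).1 v.1 v.2
    · intro m hm R F hF j u hu
      exact Ctx.step hM (by change 3 * m + 3 ≤ 3 * n; omega) hF j hu
    · intro m a
      exact Ctx.P_inl hM _ a
    · intro m a u h
      exact h.2

theorem exists_iota (P X : Type) [Finite P] [Finite X] : ∃ (K : ℕ)
    (ι : X → (Option P → Option (Fin K)) → (Option P → Option (Fin K))),
    (∀ x y d, ι x y d ≠ none) ∧ ∀ x x' y y', (∃ d, y (some d) = none) → (∃ d, y' (some d) = none) →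
      ι x y = ι x' y' → x = x' ∧ y = y' := by
  have := Fintype.ofFinite P
  have := Fintype.ofFinite X
  let s := Fintype.card P
  let K := Fintype.card X * s * 2 ^ s + 1
  have hcard : Fintype.card (X × P × (P → Option (Fin K))) ≤
      Fintype.card (Option P → Fin K) := by
    simp only [Fintype.card_prod, Fintype.card_fun, Fintype.card_option, Fintype.card_fin]
    change Fintype.card X * (s * (K + 1) ^ s) ≤ K ^ (s + 1)
    calc Fintype.card X * (s * (K + 1) ^ s) ≤ Fintype.card X * (s * (2 * K) ^ s) := by
          gcongr; omega
      _ = (Fintype.card X * s * 2 ^ s) * K ^ s := by rw [mul_pow]; ring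
      _ ≤ K * K ^ s := by gcongr; omega
      _ = K ^ (s + 1) := by ring
  obtain ⟨g⟩ := Function.Embedding.nonempty_of_card_le hcard
  let code : (y : Option P → Option (Fin K)) → (∃ d, y (some d) = none) → P × (P → Option (Fin K)) :=
    fun y h => (h.choose, fun i => if i = h.choose then y none else y (some i))
  have hcode : ∀ y y' h h', code y h = code y' h' → y = y' := by
    intro y y' h h' hc
    simp only [code, Prod.mk.injEq] at hc
    obtain ⟨h1, h2⟩ := hc
    have h3 := h.choose_spec
    have h3' := h'.choose_spec
    rw [← h1] at h3' h2
    funext d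
    cases d with
    | none => simpa using congrFun h2 h.choose
    | some i =>
      by_cases hi : i = h.choose
      · rw [hi, h3, h3']
      · simpa [hi] using congrFun h2 i
  refine ⟨K, fun x y => if h : ∃ d, y (some d) = none then fun d => some (g (x, code y h) d)
    else fun d => some ⟨0, by omega⟩, ?_, ?_⟩
  · intro x y d
    dsimp only
    split_ifs <;> simp
  · intro x x' y y' h h' he
    dsimp only at he
    rw [dif_pos h, dif_pos h'] at he
    have : g (x, code y h) = g (x', code y' h') := by
      funext d
      exact Option.some_injective _ (congrFun he d)
    have := g.injective this
    simp only [Prod.mk.injEq] at this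
    exact ⟨this.1, hcode _ _ _ _ this.2⟩

end M3
end FQA

namespace FQA
section M3b
open Classical

abbrev Yt (σ : Sig) (K : ℕ) : Type := Option σ.Pos → Option (Fin K)
def Yok {σ : Sig} {K : ℕ} (y : Yt σ K) : Prop := ∃ d, y (some d) = none
abbrev Tag (σ : Sig) (V : Type) (K : ℕ) : Type :=
  Option (Option (σ.Pos × V)) × Yt σ K × List (σ.Pos × V)

structure Fdc {σ : Sig} {E : Env σ} {α : Type} {I : Inst σ α} {n : ℕ} (B : Base E I n) where
  K : ℕ
  Rm : ℕ
  hRm : ∀ p, E.rank p ≤ Rm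
  io : Tag σ B.V K → Yt σ K
  io_om : ∀ y, io (none, y, []) = y
  io_inj : ∀ t t', Yok t.2.1 → Yok t'.2.1 → t.2.2.length ≤ Rm → t'.2.2.length ≤ Rm →
    io t = io t' → t = t'

theorem exists_fdc {σ : Sig} {E : Env σ} {α : Type} {I : Inst σ α} {n : ℕ} (B : Base E I n) :
    Nonempty (Fdc B) := by
  have := B.fin
  obtain ⟨Rm, hR⟩ : ∃ Rm, ∀ p, E.rank p ≤ Rm := by
    obtain ⟨b, hB⟩ := (Set.finite_range E.rank).bddAbove
    exact ⟨b, fun p => hB ⟨p, rfl⟩⟩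
  have : Finite {l : List (σ.Pos × B.V) // l.length ≤ Rm} :=
    Set.Finite.to_subtype (List.finite_length_le _ Rm)
  obtain ⟨K, ι, h1, h2⟩ := exists_iota σ.Pos
    (Option (Option (σ.Pos × B.V)) × {l : List (σ.Pos × B.V) // l.length ≤ Rm})
  refine ⟨⟨K, Rm, hR, fun t => if t.1 = none ∧ t.2.2 = [] then t.2.1 else
    if h : t.2.2.length ≤ Rm then ι (t.1, ⟨t.2.2, h⟩) t.2.1 else t.2.1, fun y => by simp, ?_⟩⟩
  rintro ⟨k, y, l⟩ ⟨k', y', l'⟩ hy hy' hl hl' he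
  simp only at hy hy' hl hl' he
  rw [dif_pos hl, dif_pos hl'] at he
  split_ifs at he with h3 h4 h4
  · rw [h3.1, h4.1, h3.2, h4.2, he]
  · obtain ⟨d, hd⟩ := hy
    rw [he] at hd
    exact absurd hd (h1 _ _ _)
  · obtain ⟨d, hd⟩ := hy'
    rw [← he] at hd
    exact absurd hd (h1 _ _ _)
  · have := h2 _ _ _ _ hy hy' he
    simp only [Prod.mk.injEq, Subtype.mk.injEq] at this
    obtain ⟨⟨rfl, rfl⟩, rfl⟩ := this
    rfl

namespace Fdc
variable {σ : Sig} {E : Env σ} {α : Type} {I : Inst σ α} {n : ℕ} {B : Base E I n} (D : Fdc B)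

def mc (E : Env σ) (R : σ.Rel) (p l : Fin (σ.ar R)) (q : σ.Pos) : Prop :=
  ∃ d, q = ⟨R, d⟩ ∧ ¬ E.fd R d p ∧ E.fd R d l

noncomputable def mask {K : ℕ} (E : Env σ) (R : σ.Rel) (p l : Fin (σ.ar R)) (y : Yt σ K) : Yt σ K
  | none => y none
  | some q => if mc E R p l q then none else y (some q)

theorem mask_mask {K : ℕ} {R : σ.Rel} {p l : Fin (σ.ar R)} {y : Yt σ K} :
    mask E R p l (mask E R p l y) = mask E R p l y := by
  funext d
  cases d with
  | none => rfl
  | some q => simp only [mask]; split_ifs <;> rfl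

theorem mask_congr {K : ℕ} {R : σ.Rel} {p l l' : Fin (σ.ar R)} (h : E.brep l = E.brep l')
    {y : Yt σ K} : mask E R p l y = mask E R p l' y := by
  have h1 : ∀ q, mc E R p l q ↔ mc E R p l' q := by
    intro q
    constructor
    · rintro ⟨d, h1, h2, h3⟩
      exact ⟨d, h1, h2, E.fd_trans h3 (E.fd_of_brep h)⟩
    · rintro ⟨d, h1, h2, h3⟩
      exact ⟨d, h1, h2, E.fd_trans h3 (E.fd_of_brep h.symm)⟩
  funext d
  cases d with
  | none => rfl
  | some q => simp only [mask, h1]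

theorem mask_ok {K : ℕ} {R : σ.Rel} {p l : Fin (σ.ar R)} (h : ¬ E.fd R l p) {y : Yt σ K} :
    Yok (mask E R p l y) := by
  refine ⟨⟨R, l⟩, ?_⟩
  simp only [mask]
  rw [if_pos ⟨l, rfl, h, E.fd_refl R l⟩]

noncomputable def ch (B : Base E I n) (R : σ.Rel) (p : Fin (σ.ar R)) (a : B.V) :
    Fin (σ.ar R) → B.V :=
  if h : occursAt B.J ⟨R, p⟩ a then h.choose else fun _ => a

theorem ch_mem {R : σ.Rel} {p : Fin (σ.ar R)} {a : B.V} (h : occursAt B.J ⟨R, p⟩ a) :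
    (⟨R, ch B R p a⟩ : Fact σ B.V) ∈ B.J := by
  rw [ch, dif_pos h]; exact h.choose_spec.1

theorem ch_eq {R : σ.Rel} {p : Fin (σ.ar R)} {a : B.V} (h : occursAt B.J ⟨R, p⟩ a) :
    ch B R p a p = a := by
  rw [ch, dif_pos h]; exact h.choose_spec.2

def good (B : Base E I n) (R : σ.Rel) (p : Fin (σ.ar R)) (a : B.V) : Prop :=
  E.brep p = p ∧ occursAt B.J ⟨R, p⟩ a

def Res (k : Option (Option (σ.Pos × B.V))) (y : Yt σ D.K) :
    List (σ.Pos × B.V) → (R : σ.Rel) → Fin (σ.ar R) → B.V → Prop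
  | [], R, p, a => match k with
    | none => False
    | some none => y = (fun _ => none) ∧ ∃ t, (⟨R, t⟩ : Fact σ α) ∈ I ∧ a = B.e (t p)
    | some (some (q, a')) => ∃ p', q = ⟨R, p'⟩ ∧ ¬ E.fd R p p' ∧ ch B R p' a' p = a ∧
        good B R p' a' ∧ mask E R p' p y = y
  | (q, a') :: l, R, p, a => ∃ p', q = ⟨R, p'⟩ ∧ E.fd R p p' ∧ ¬ E.fd R p' p ∧ ch B R p' a' p = a ∧
        good B R p' a' ∧ l.length ≤ E.rank ⟨R, p'⟩ ∧ ¬ Res k y l R p' a'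

def req (R : σ.Rel) (p : Fin (σ.ar R)) (a : B.V) (t : Tag σ B.V D.K) : Prop :=
  good B R p a ∧ t.2.2.length ≤ E.rank ⟨R, p⟩ ∧ Yok t.2.1 ∧ ¬ D.Res t.1 t.2.1 t.2.2 R p a

noncomputable def tg (R : σ.Rel) (p : Fin (σ.ar R)) (a : B.V) (t : Tag σ B.V D.K)
    (j : Fin (σ.ar R)) : Tag σ B.V D.K :=
  if E.brep j = p then t
  else if E.fd R j p then (t.1, t.2.1, (⟨R, p⟩, a) :: t.2.2)
  else (some (some (⟨R, p⟩, a)), mask E R p j (D.io t), [])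

noncomputable def cf (R : σ.Rel) (p : Fin (σ.ar R)) (a : B.V) (t : Tag σ B.V D.K)
    (j : Fin (σ.ar R)) : B.V × Tag σ B.V D.K := (ch B R p a j, D.tg R p a t j)

def Cr : Inst σ (B.V × Tag σ B.V D.K) :=
  {F | ∃ p a t, D.req F.1 p a t ∧ F.2 = D.cf F.1 p a t}

def rho : Tag σ B.V D.K := (some none, fun _ => none, [])

def I1 : Inst σ (B.V × Tag σ B.V D.K) :=
  {F | (∃ t, (⟨F.1, t⟩ : Fact σ α) ∈ I ∧ F.2 = fun j => (B.e (t j), D.rho)) ∨ F ∈ D.Cr}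

theorem Cr_fin : D.Cr.Finite := by
  have := B.fin
  have h1 : {t : Tag σ B.V D.K | t.2.2.length ≤ D.Rm}.Finite := by
    refine ((Set.finite_univ (α := Option (Option (σ.Pos × B.V)))).prod
      ((Set.finite_univ (α := Yt σ D.K)).prod (List.finite_length_le _ D.Rm))).subset ?_
    rintro ⟨k, y, l⟩ h
    exact ⟨trivial, trivial, h⟩
  have h2 := (Set.finite_univ (α := σ.Pos × B.V)).prod h1
  refine (h2.image (fun z => (⟨z.1.1.1, D.cf z.1.1.1 z.1.1.2 z.1.2 z.2⟩ :
    Fact σ (B.V × Tag σ B.V D.K)))).subset ?_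
  rintro ⟨R, F⟩ ⟨p, a, t, h3, h4⟩
  refine ⟨((⟨R, p⟩, a), t), ⟨trivial, h3.2.1.trans (D.hRm _)⟩, ?_⟩
  simp only at h4 ⊢
  rw [h4]

theorem proj {R : σ.Rel} {F} (h : (⟨R, F⟩ : Fact σ (B.V × Tag σ B.V D.K)) ∈ D.Cr) :
    (⟨R, fun j => (F j).1⟩ : Fact σ B.V) ∈ B.J := by
  obtain ⟨p, a, t, h1, h2⟩ := h
  simp only at h1 h2
  rw [h2]
  exact ch_mem h1.1.2

theorem Res_rho {R : σ.Rel} {p : Fin (σ.ar R)} {a : B.V} {t : Fin (σ.ar R) → α}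
    (h : (⟨R, t⟩ : Fact σ α) ∈ I) (ha : a = B.e (t p)) :
    D.Res D.rho.1 D.rho.2.1 D.rho.2.2 R p a := ⟨rfl, t, h, ha⟩

theorem occ (p : σ.Pos) (v : B.V) (t : Tag σ B.V D.K) :
    occursAt D.I1 p (v, t) ↔ occursAt B.J p v ∧ Yok t.2.1 ∧ t.2.2.length ≤ E.rank p := by
  obtain ⟨R, j⟩ := p
  constructor
  · rintro ⟨F, ⟨s, hs, h2⟩ | ⟨p, a, t', h1, h2⟩, h3⟩
    · simp only at hs h2 h3
      rw [h2] at h3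
      simp only [Prod.mk.injEq] at h3
      obtain ⟨rfl, rfl⟩ := h3
      exact ⟨⟨_, B.eJ _ _ hs, rfl⟩, ⟨⟨R, j⟩, rfl⟩, Nat.zero_le _⟩
    · simp only at h1 h2 h3
      rw [h2] at h3
      simp only [cf, Prod.mk.injEq] at h3
      obtain ⟨rfl, rfl⟩ := h3
      refine ⟨⟨_, ch_mem h1.1.2, rfl⟩, ?_⟩
      obtain ⟨g1, g2, g3, g4⟩ := h1
      unfold tg
      split_ifs with k1 k2
      · refine ⟨g3, ?_⟩
        rw [← k1, E.rank_brep] at g2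
        exact g2
      · refine ⟨g3, ?_⟩
        have : ¬ E.rank ⟨R, j⟩ ≤ E.rank ⟨R, p⟩ := by
          intro h
          have := E.brep_eq k2 (E.fd_symm k2 h)
          rw [g1.1] at this
          exact k1 this
        simp only [List.length_cons]
        omega
      · exact ⟨mask_ok k2, Nat.zero_le _⟩
  · rintro ⟨⟨F, hF, rfl⟩, hy, hl⟩
    simp only
    obtain ⟨k, y, l⟩ := t
    simp only at hF hy hl ⊢
    have hg : good B R (E.brep j) (F (E.brep j)) := ⟨E.brep_brep j, F, hF, rfl⟩
    have hbb : E.brep (E.brep j) = E.brep j := E.brep_brep j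
    by_cases hr : D.Res k y l R (E.brep j) (F (E.brep j))
    · cases l with
      | nil =>
        rcases k with _ | _ | ⟨q, a'⟩
        · exact hr.elim
        · obtain ⟨rfl, s, hs, h2⟩ := hr
          refine ⟨fun i => (B.e (s i), D.rho), Or.inl ⟨s, hs, rfl⟩, ?_⟩
          have := B.rufd hbb hF (B.eJ _ _ hs) h2
          simp only [this]
          rfl
        · obtain ⟨p', rfl, h2, h3, h4, h5⟩ := hr
          have h6 : ¬ E.fd R j p' := fun h => h2 (E.fd_trans (E.brep_spec j).1 h)
          have h6' : E.brep j ≠ p' := fun h => h2 (h ▸ E.fd_refl R _)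
          refine ⟨D.cf R p' a' (none, y, []), Or.inr ⟨p', a', _, ⟨h4, Nat.zero_le _, hy, ?_⟩, rfl⟩, ?_⟩
          · exact fun h => h
          · have h7 := B.rufd hbb (ch_mem h4.2) hF h3
            simp only [cf, h7, tg]
            rw [if_neg h6', if_neg h6, D.io_om, mask_congr hbb.symm, h5]
      | cons z l =>
        obtain ⟨q, a'⟩ := z
        obtain ⟨p', rfl, h2, h2', h3, h4, h5, h6⟩ := hr
        have h7 : E.fd R j p' := E.fd_trans (E.brep_spec j).2 h2
        have h8 : E.brep j ≠ p' := fun h => h2' (h ▸ E.fd_refl R _)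
        refine ⟨D.cf R p' a' (k, y, l), Or.inr ⟨p', a', _, ⟨h4, h5, hy, h6⟩, rfl⟩, ?_⟩
        have h9 := B.rufd hbb (ch_mem h4.2) hF h3
        simp only [cf, h9, tg]
        rw [if_neg h8, if_pos h7]
    · refine ⟨D.cf R (E.brep j) (F (E.brep j)) (k, y, l), Or.inr ⟨_, _, _, ⟨hg, ?_, hy, hr⟩, rfl⟩, ?_⟩
      · simp only
        rw [E.rank_brep]; exact hl
      · have h9 := B.rufd hbb (ch_mem hg.2) hF (ch_eq hg.2)
        simp only [cf, h9, tg, if_true]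

theorem uid {p q : σ.Pos} (h : E.le p q) {w} (hw : occursAt D.I1 p w) : occursAt D.I1 q w := by
  obtain ⟨v, t⟩ := w
  rw [occ] at hw ⊢
  exact ⟨B.uid _ _ _ h hw.1, hw.2.1, hw.2.2.trans (E.rank_le h)⟩

theorem not_share {R : σ.Rel} {F} (h : (⟨R, F⟩ : Fact σ (B.V × Tag σ B.V D.K)) ∈ D.Cr)
    {t} (ht : (⟨R, t⟩ : Fact σ α) ∈ I) (j) : F j ≠ (B.e (t j), D.rho) := by
  obtain ⟨p, a, t', ⟨h1, h2, h3, h4⟩, h5⟩ := h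
  simp only at h1 h2 h3 h4 h5
  rw [h5]
  intro h6
  simp only [cf, Prod.mk.injEq] at h6
  obtain ⟨h6, h7⟩ := h6
  unfold tg at h7
  split_ifs at h7 with k1 k2
  · subst h7
    refine h4 (D.Res_rho ht ?_)
    have hb : E.brep j = E.brep p := by rw [h1.1, k1]
    have := B.rufd hb (ch_mem h1.2) (B.eJ _ _ ht) h6
    rwa [ch_eq h1.2] at this
  · simp [rho] at h7
  · simp [rho] at h7

theorem aux1 {R : σ.Rel} {p p' : Fin (σ.ar R)} {a a' : B.V} {t t' : Tag σ B.V D.K}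
    (h : D.req R p a t) (h' : D.req R p' a' t') {j : Fin (σ.ar R)} (hj : E.brep j = p)
    (hv : ch B R p a j = ch B R p' a' j) (ht : D.tg R p' a' t' j = t) :
    p = p' ∧ a = a' ∧ t = t' := by
  obtain ⟨g1, g2, g3, g4⟩ := h
  obtain ⟨g1', g2', g3', g4'⟩ := h'
  have hb : E.brep j = E.brep p := by rw [g1.1, hj]
  have hv2 := B.rufd hb (ch_mem g1.2) (ch_mem g1'.2) hv
  rw [ch_eq g1.2] at hv2
  unfold tg at ht
  split_ifs at ht with k1 k2
  · have : p = p' := hj.symm.trans k1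
    subst this
    rw [ch_eq g1'.2] at hv2
    exact ⟨rfl, hv2, ht.symm⟩
  · exfalso
    subst ht
    refine g4 ⟨p', rfl, ?_, ?_, hv2.symm, g1', g2', g4'⟩
    · rw [← hj]; exact E.fd_trans (E.brep_spec j).1 k2
    · intro h
      apply k1
      rw [← g1'.1]
      refine E.brep_eq k2 (E.fd_trans h ?_)
      rw [← hj]; exact (E.brep_spec j).1
  · exfalso
    subst ht
    refine g4 ⟨p', rfl, ?_, hv2.symm, g1', ?_⟩
    · rw [← hj]; exact fun h => k2 (E.fd_trans (E.brep_spec j).2 h)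
    · rw [mask_congr hb, mask_mask]

/-- two created facts agreeing at `j` have the same base; and agreement implies equal tags or
both are in the pool case. -/
theorem share {R : σ.Rel} {p p' : Fin (σ.ar R)} {a a' : B.V} {t t' : Tag σ B.V D.K}
    (h : D.req R p a t) (h' : D.req R p' a' t') {j : Fin (σ.ar R)}
    (hj : D.cf R p a t j = D.cf R p' a' t' j) :
    p = p' ∧ a = a' ∧ (t = t' ∨ (¬ E.fd R j p ∧
      mask E R p j (D.io t) = mask E R p j (D.io t'))) := by
  simp only [cf, Prod.mk.injEq] at hj
  obtain ⟨hv, ht⟩ := hj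
  by_cases k1 : E.brep j = p
  · have : D.tg R p a t j = t := by rw [tg, if_pos k1]
    rw [this] at ht
    obtain ⟨e1, e2, e3⟩ := D.aux1 h h' k1 hv ht.symm
    exact ⟨e1, e2, Or.inl e3⟩
  by_cases k1' : E.brep j = p'
  · have : D.tg R p' a' t' j = t' := by rw [tg, if_pos k1']
    rw [this] at ht
    obtain ⟨e1, e2, e3⟩ := D.aux1 h' h k1' hv.symm ht
    exact ⟨e1.symm, e2.symm, Or.inl e3.symm⟩
  unfold tg at ht
  rw [if_neg k1, if_neg k1'] at ht
  split_ifs at ht with k2 k3 k3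
  · simp only [Prod.mk.injEq, List.cons.injEq, Sigma.mk.injEq, heq_eq_eq, true_and] at ht
    obtain ⟨e1, e2, ⟨e3, e4⟩, e5⟩ := ht
    exact ⟨e3, e4, Or.inl (Prod.ext e1 (Prod.ext e2 e5))⟩
  · simp at ht
  · simp at ht
  · simp only [Prod.mk.injEq, Sigma.mk.injEq, heq_eq_eq, true_and, Option.some.injEq, and_true] at ht
    obtain ⟨⟨e3, e4⟩, e5⟩ := ht
    subst e3
    exact ⟨rfl, e4, Or.inr ⟨k2, e5⟩⟩

theorem share_fst {R : σ.Rel} {F F'} (h : (⟨R, F⟩ : Fact σ (B.V × Tag σ B.V D.K)) ∈ D.Cr)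
    (h' : (⟨R, F'⟩ : Fact σ (B.V × Tag σ B.V D.K)) ∈ D.Cr) {j} (hj : F j = F' j) :
    (fun i => (F i).1) = (fun i => (F' i).1) := by
  obtain ⟨p, a, t, h1, h2⟩ := h
  obtain ⟨p', a', t', h1', h2'⟩ := h'
  simp only at h1 h2 h1' h2'
  rw [h2, h2'] at hj ⊢
  obtain ⟨rfl, rfl, _⟩ := D.share h1 h1' hj
  rfl

theorem fd_ok {R : σ.Rel} {F F'} (h : (⟨R, F⟩ : Fact σ (B.V × Tag σ B.V D.K)) ∈ D.Cr)
    (h' : (⟨R, F'⟩ : Fact σ (B.V × Tag σ B.V D.K)) ∈ D.Cr) {L : Set (Fin (σ.ar R))} {r}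
    (hL : L.Nonempty) (hcl : ∀ d, (∀ l ∈ L, E.fd R d l) → E.fd R d r)
    (hj : ∀ l ∈ L, F l = F' l) : F r = F' r := by
  obtain ⟨p, a, t, h1, h2⟩ := h
  obtain ⟨p', a', t', h1', h2'⟩ := h'
  simp only at h1 h2 h1' h2'
  rw [h2, h2'] at hj ⊢
  obtain ⟨l0, hl0⟩ := hL
  obtain ⟨rfl, rfl, h3⟩ := D.share h1 h1' (hj l0 hl0)
  by_cases ht : t = t'
  · rw [ht]
  have h4 : ∀ l ∈ L, ¬ E.fd R l p ∧ mask E R p l (D.io t) = mask E R p l (D.io t') := fun l hl =>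
    ((D.share h1 h1' (hj l hl)).2.2).resolve_left ht
  have h5 : D.io t ≠ D.io t' := fun h => ht (D.io_inj _ _ h1.2.2.1 h1'.2.2.1
    (h1.2.1.trans (D.hRm _)) (h1'.2.1.trans (D.hRm _)) h)
  have h6 : ∀ x, D.io t x ≠ D.io t' x → ∃ d, x = some ⟨R, d⟩ ∧ ¬ E.fd R d p ∧ E.fd R d r := by
    intro x hx
    have h7 : ∀ l ∈ L, ∃ q, x = some q ∧ mc E R p l q := by
      intro l hl
      have h8 := congrFun (h4 l hl).2 x
      cases x with
      | none => exact absurd h8 hx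
      | some q =>
        refine ⟨q, rfl, ?_⟩
        by_contra h9
        simp only [mask, if_neg h9] at h8
        exact hx h8
    obtain ⟨q, rfl, d, rfl, h9, h10⟩ := h7 l0 hl0
    refine ⟨d, rfl, h9, hcl d fun l hl => ?_⟩
    obtain ⟨q, e1, d', e2, e3, e4⟩ := h7 l hl
    simp only [Option.some.injEq] at e1
    rw [← e1] at e2
    simp only [Sigma.mk.injEq, heq_eq_eq, true_and] at e2
    rw [e2]; exact e4
  have h7 : mask E R p r (D.io t) = mask E R p r (D.io t') := by
    funext x
    by_cases hx : D.io t x = D.io t' x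
    · cases x with
      | none => exact hx
      | some q => simp only [mask, hx]
    · obtain ⟨d, rfl, h8, h9⟩ := h6 x hx
      have : mc E R p r ⟨R, d⟩ := ⟨d, rfl, h8, h9⟩
      simp only [mask, if_pos this]
  obtain ⟨x, hx⟩ := Function.ne_iff.1 h5
  obtain ⟨d, rfl, h8, h9⟩ := h6 x hx
  have h10 : ¬ E.fd R r p := fun h => h8 (E.fd_trans h9 h)
  have h11 : E.brep r ≠ p := by
    rintro rfl
    exact h10 (E.brep_spec r).2
  simp only [cf, tg, if_neg h11, if_neg h10, h7]

end Fdc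
end M3b
end FQA

namespace FQA
section M4
open Classical

theorem tau_inj' {S : Type} {N : ℕ} (hN : 2 ≤ N) {s t : S}
    (h : (tau s : Equiv.Perm (Big S N)) = tau t) : s = t := by
  by_contra hne
  refine tau_girth (N := N) [s, t] (by simpa using hne) (by simpa using hN) (by simp) ?_
  simp [h, tau_mul_self]

theorem leaf {S C : Type} (κ : S → C) {k : ℕ} (Φ : Finset (C × Equiv.Perm (Big S (2 * k))))
    (hk : Φ.card ≤ k) (hne : Φ.Nonempty) :
    ∃ ε ∈ Φ, ∀ s s', κ s = ε.1 → κ s' = ε.1 →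
      (∃ η ∈ Φ, η ≠ ε ∧ ∃ t, κ t = η.1 ∧ ε.2 * tau s = η.2 * tau t) →
      (∃ η ∈ Φ, η ≠ ε ∧ ∃ t, κ t = η.1 ∧ ε.2 * tau s' = η.2 * tau t) → s = s' := by
  by_contra hcon
  push Not at hcon
  have step : ∀ (z : {ε // ε ∈ Φ} × S), ∃ (η : {ε // ε ∈ Φ}) (s u : S), s ≠ z.2 ∧ s ≠ u ∧
      η.1.2 = z.1.1.2 * tau s * tau u := by
    rintro ⟨⟨ε, hε⟩, t⟩
    obtain ⟨s, s', h1, h2, h3, h4, h5⟩ := hcon ε hε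
    have key : ∀ s, κ s = ε.1 → (∃ η ∈ Φ, η ≠ ε ∧ ∃ t, κ t = η.1 ∧ ε.2 * tau s = η.2 * tau t) →
        ∃ (η : {ε // ε ∈ Φ}) (u : S), s ≠ u ∧ η.1.2 = ε.2 * tau s * tau u := by
      rintro s hs ⟨η, hη, hne, u, hu, he⟩
      refine ⟨⟨η, hη⟩, u, ?_, ?_⟩
      · rintro rfl
        exact hne (Prod.ext (hu.symm.trans hs) (mul_right_cancel he.symm))
      · rw [he, mul_assoc, tau_mul_self, mul_one]
    by_cases hst : s = t
    · obtain ⟨η, u, k1, k2⟩ := key s' h2 h4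
      exact ⟨η, s', u, fun e => h5 (hst.trans e.symm), k1, k2⟩
    · obtain ⟨η, u, k1, k2⟩ := key s h1 h3
      exact ⟨η, s, u, hst, k1, k2⟩
  choose η s u h1 h2 h3 using step
  obtain ⟨ε0, h0⟩ := hne
  obtain ⟨s0, _⟩ := hcon ε0 h0
  let st : ℕ → {ε // ε ∈ Φ} × S := fun i => (fun z => (η z, u z))^[i] (⟨ε0, h0⟩, s0)
  have hst : ∀ i, st (i + 1) = (η (st i), u (st i)) := fun i => Function.iterate_succ_apply' _ _ _
  have hw : ∀ m i, ∃ w : List S, w.length = 2 * m ∧ w.IsChain (· ≠ ·) ∧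
      (∀ x ∈ w.head?, (st i).2 ≠ x) ∧
      (st (i + m)).1.1.2 = (st i).1.1.2 * (w.map tau).prod := by
    intro m
    induction m with
    | zero => exact fun i => ⟨[], by simp, by simp, by simp, by simp⟩
    | succ m ih =>
      intro i
      obtain ⟨w, e1, e2, e3, e4⟩ := ih (i + 1)
      refine ⟨s (st i) :: u (st i) :: w, by simp [e1]; omega, ?_, ?_, ?_⟩
      · refine List.IsChain.cons_cons (h2 _) ?_
        rw [List.isChain_cons]
        refine ⟨fun y hy => ?_, e2⟩
        have := e3 y hy
        rwa [hst] at this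
      · simpa using (h1 (st i)).symm
      · rw [show i + (m + 1) = i + 1 + m by omega, e4, hst]
        simp only [h3, List.map_cons, List.prod_cons, mul_assoc]
  have hpig : ∃ i j : Fin (k + 1), i ≠ j ∧ (st i).1 = (st j).1 := by
    refine Fintype.exists_ne_map_eq_of_card_lt (fun i : Fin (k + 1) => (st i).1) ?_
    simp; omega
  have fin : ∀ i j : ℕ, i < j → j ≤ k → (st i).1 = (st j).1 → False := by
    intro i j hij hj he
    obtain ⟨w, e1, e2, e3, e4⟩ := hw (j - i) i
    rw [show i + (j - i) = j by omega, ← he] at e4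
    refine tau_girth w e2 (by omega) ?_ (mul_eq_left.1 e4.symm)
    intro h
    rw [h] at e1
    simp at e1
    omega
  obtain ⟨i, j, hij, he⟩ := hpig
  rcases lt_or_gt_of_ne (fun h => hij (Fin.ext h) : (i : ℕ) ≠ j) with h | h
  · exact fin i j h (by omega) he
  · exact fin j i h (by omega) he.symm

variable {σ : Sig} {E : Env σ} {α : Type} {I : Inst σ α} {n : ℕ}

abbrev Sl (σ : Sig) (α V : Type) : Type := α ⊕ (Σ F : Fact σ V, Fin (σ.ar F.1))
def kap {V : Type} : Sl σ α V → Option (Fact σ V)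
  | Sum.inl _ => none
  | Sum.inr x => some x.1
def vl (B : Base E I n) : Sl σ α B.V → B.V
  | Sum.inl a => B.e a
  | Sum.inr x => x.1.2 x.2
abbrev Gp (σ : Sig) (α V : Type) (k : ℕ) : Type := Equiv.Perm (Big (Sl σ α V) (2 * k))

theorem realize (B : Base E I n) (k : ℕ) (hkn : k ≤ n) (M : Inst σ ℕ) (cc : α → ℕ)
    (S : ℕ → B.V → ℕ → Prop) (S1 : ∀ m v u, S (m+1) v u → S m v u) (S2 : ∀ m v, ∃ u, S m v u)
    (S3 : ∀ m < n, ∀ R (F : Fin (σ.ar R) → B.V), (⟨R, F⟩ : Fact σ B.V) ∈ B.J →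
      ∀ j u, S (m+1) (F j) u → ∃ f, (⟨R, f⟩ : Fact σ ℕ) ∈ M ∧ f j = u ∧ ∀ i, S m (F i) (f i))
    (S4 : ∀ m a, S m (B.e a) (cc a)) (S5 : ∀ m a u, S (m+1) (B.e a) u → u = cc a)
    (m : ℕ) : ∀ (Φ : Finset (Option (Fact σ B.V) × Gp σ α B.V k)), Φ.card = m → m ≤ k →
    (∀ ε ∈ Φ, ∀ F, ε.1 = some F → F ∈ B.J) → ∃ h : B.V × Gp σ α B.V k → ℕ,
      (∀ x, S (k - m) x.1 (h x)) ∧ ∀ ε ∈ Φ,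
        (∀ F, ε.1 = some F →
          (⟨F.1, fun j => h (F.2 j, ε.2 * tau (Sum.inr ⟨F, j⟩))⟩ : Fact σ ℕ) ∈ M) ∧
        (ε.1 = none → ∀ a, h (B.e a, ε.2 * tau (Sum.inl a)) = cc a) := by
  induction m with
  | zero =>
    intro Φ hc _ _
    rw [Finset.card_eq_zero] at hc
    subst hc
    choose h hh using S2 k
    exact ⟨fun x => h x.1, fun x => hh _, by simp⟩
  | succ m ih =>
    intro Φ hc hmk hJ
    obtain ⟨ε, hε, hleaf⟩ := leaf (kap : Sl σ α B.V → _) Φ (by omega)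
      (Finset.card_pos.1 (by omega))
    obtain ⟨h', hl', hr'⟩ := ih (Φ.erase ε) (by rw [Finset.card_erase_of_mem hε]; omega) (by omega)
      (fun η hη => hJ η (Finset.mem_of_mem_erase hη))
    set sh : Sl σ α B.V → Prop := fun s =>
      ∃ η ∈ Φ, η ≠ ε ∧ ∃ t, kap t = η.1 ∧ ε.2 * tau s = η.2 * tau t with hsh
    have hlev : k - m = (k - (m + 1)) + 1 := by omega
    rw [hlev] at hl'
    have claim : ∃ f : Sl σ α B.V → ℕ, (∀ s, kap s = ε.1 → S (k - (m+1)) (vl B s) (f s)) ∧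
        (∀ s, kap s = ε.1 → sh s → f s = h' (vl B s, ε.2 * tau s)) ∧
        (∀ F, ε.1 = some F → (⟨F.1, fun j => f (Sum.inr ⟨F, j⟩)⟩ : Fact σ ℕ) ∈ M) ∧
        (ε.1 = none → ∀ a, f (Sum.inl a) = cc a) := by
      cases he : ε.1 with
      | none =>
        refine ⟨fun s => Sum.elim cc (fun _ => 0) s, ?_, ?_, by simp, by simp⟩
        · rintro (a | x) hs
          · exact S4 _ _
          · simp [kap] at hs
        · rintro (a | x) hs _
          · exact (S5 _ _ _ (hl' (vl B (Sum.inl a), ε.2 * tau (Sum.inl a)))).symm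
          · simp [kap] at hs
      | some F =>
        have hj0 : ∃ j0, ∀ s, kap s = ε.1 → sh s → s = Sum.inr ⟨F, j0⟩ := by
          by_cases hex : ∃ s, kap s = ε.1 ∧ sh s
          · obtain ⟨s, e1, e2⟩ := hex
            rcases s with a | ⟨F', j⟩
            · rw [he] at e1
              simp [kap] at e1
            · have e1' := e1
              rw [he] at e1
              simp only [kap, Option.some.injEq] at e1
              subst e1
              exact ⟨j, fun s g1 g2 => hleaf _ _ g1 e1' g2 e2⟩
          · push Not at hex
            exact ⟨⟨0, σ.ar_pos F.1⟩, fun s g1 g2 => absurd g2 (hex s g1)⟩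
        obtain ⟨j0, hj0⟩ := hj0
        obtain ⟨f0, k1, k2, k3⟩ := S3 (k - (m+1)) (by omega) F.1 F.2 (hJ ε hε F he) j0
          (h' (F.2 j0, ε.2 * tau (Sum.inr ⟨F, j0⟩))) (hl' (F.2 j0, ε.2 * tau (Sum.inr ⟨F, j0⟩)))
        have hf : ∃ f : Sl σ α B.V → ℕ, ∀ j, f (Sum.inr ⟨F, j⟩) = f0 j := by
          refine ⟨fun s => if h : ∃ j, s = Sum.inr ⟨F, j⟩ then f0 h.choose else 0, fun j => ?_⟩
          have hx : ∃ j', (Sum.inr ⟨F, j⟩ : Sl σ α B.V) = Sum.inr ⟨F, j'⟩ := ⟨j, rfl⟩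
          simp only [dif_pos hx]
          have := hx.choose_spec
          generalize hx.choose = c at this ⊢
          simp only [Sum.inr.injEq, Sigma.mk.injEq, heq_eq_eq, true_and] at this
          rw [← this]
        obtain ⟨f, hf⟩ := hf
        refine ⟨f, ?_, ?_, ?_, by simp⟩
        · rintro (a | ⟨F', j⟩) hs
          · simp [kap] at hs
          · simp only [kap, Option.some.injEq] at hs
            subst hs
            rw [hf]
            exact k3 j
        · intro s hs hss
          rw [hj0 s (by rw [he]; exact hs) hss, hf]
          exact k2
        · intro F' hF'
          simp only [Option.some.injEq] at hF'
          subst hF'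
          simpa only [hf] using k1
    obtain ⟨f, f1, f2, f3, f4⟩ := claim
    let Q : B.V × Gp σ α B.V k → Prop := fun x => ∃ s, kap s = ε.1 ∧ x = (vl B s, ε.2 * tau s)
    let h : B.V × Gp σ α B.V k → ℕ := fun x => if hx : Q x then f hx.choose else h' x
    have hin : ∀ s, kap s = ε.1 → h (vl B s, ε.2 * tau s) = f s := by
      intro s hs
      have hx : Q (vl B s, ε.2 * tau s) := ⟨s, hs, rfl⟩
      simp only [h, dif_pos hx]
      have h1 := hx.choose_spec.2
      rw [Prod.mk.injEq] at h1
      rw [← tau_inj' (by omega) (mul_left_cancel h1.2)]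
    have hout : ∀ η ∈ Φ, η ≠ ε → ∀ t, kap t = η.1 →
        h (vl B t, η.2 * tau t) = h' (vl B t, η.2 * tau t) := by
      intro η hη hne t ht
      by_cases hx : Q (vl B t, η.2 * tau t)
      · obtain ⟨s, hs, he⟩ := hx
        have he2 := he
        rw [Prod.mk.injEq] at he2
        rw [he, hin s hs]
        exact f2 s hs ⟨η, hη, hne, t, ht, he2.2.symm⟩
      · simp only [h, dif_neg hx]
    refine ⟨h, ?_, ?_⟩
    · intro x
      by_cases hx : Q x
      · obtain ⟨s, hs, rfl⟩ := hx
        rw [hin s hs]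
        exact f1 s hs
      · simp only [h, dif_neg hx]
        exact S1 _ _ _ (hl' x)
    · intro η hη
      by_cases hne : η = ε
      · subst hne
        refine ⟨fun F hF => ?_, fun hF a => ?_⟩
        · have h1 : ∀ j, h (F.2 j, η.2 * tau (Sum.inr ⟨F, j⟩)) = f (Sum.inr ⟨F, j⟩) :=
            fun j => hin (Sum.inr ⟨F, j⟩) hF.symm
          simp only [h1]
          exact f3 F hF
        · rw [← f4 hF a]
          exact hin (Sum.inl a) hF.symm
      · have hr := hr' η (Finset.mem_erase.2 ⟨hne, hη⟩)
        refine ⟨fun F hF => ?_, fun hF a => ?_⟩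
        · have h1 : ∀ j, h (F.2 j, η.2 * tau (Sum.inr ⟨F, j⟩)) = h' (F.2 j, η.2 * tau (Sum.inr ⟨F, j⟩)) :=
            fun j => hout η hη hne (Sum.inr ⟨F, j⟩) hF.symm
          simp only [h1]
          exact hr.1 F hF
        · rw [← hr.2 hF a]
          exact hout η hη hne (Sum.inl a) hF.symm

end M4
end FQA

namespace FQA
section M4b
open Classical
variable {σ : Sig} {E : Env σ} {α : Type} {I : Inst σ α} {n : ℕ}

def I2 {B : Base E I n} (D : Fdc B) (k : ℕ) :
    Inst σ ((B.V × Tag σ B.V D.K) × Gp σ α B.V k) :=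
  {F | (∃ t g, (⟨F.1, t⟩ : Fact σ α) ∈ I ∧
      F.2 = fun j => ((B.e (t j), D.rho), g * tau (Sum.inl (t j)))) ∨
    (∃ f g, (⟨F.1, f⟩ : Fact σ _) ∈ D.Cr ∧
      F.2 = fun j => (f j, g * tau (Sum.inr ⟨⟨F.1, fun i => (f i).1⟩, j⟩)))}

theorem mem_I2 {B : Base E I n} (D : Fdc B) (k : ℕ) (R : σ.Rel) (F) :
    (⟨R, F⟩ : Fact σ ((B.V × Tag σ B.V D.K) × Gp σ α B.V k)) ∈ I2 D k ↔
    (∃ (t : Fin (σ.ar R) → α) (g : Gp σ α B.V k), (⟨R, t⟩ : Fact σ α) ∈ I ∧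
      F = fun j => ((B.e (t j), D.rho), g * tau (Sum.inl (t j)))) ∨
    (∃ (f : Fin (σ.ar R) → B.V × Tag σ B.V D.K) (g : Gp σ α B.V k), (⟨R, f⟩ : Fact σ _) ∈ D.Cr ∧
      F = fun j => (f j, g * tau (Sum.inr ⟨⟨R, fun i => (f i).1⟩, j⟩))) := Iff.rfl

theorem mem_I1 {B : Base E I n} (D : Fdc B) (R : σ.Rel) (F) :
    (⟨R, F⟩ : Fact σ (B.V × Tag σ B.V D.K)) ∈ D.I1 ↔
    (∃ (t : Fin (σ.ar R) → α), (⟨R, t⟩ : Fact σ α) ∈ I ∧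
      F = fun j => (B.e (t j), D.rho)) ∨ (⟨R, F⟩ : Fact σ _) ∈ D.Cr := Iff.rfl

theorem I2_fin [Finite α] {B : Base E I n} (D : Fdc B) (k : ℕ) : (I2 D k).Finite := by
  have := B.fin
  have : Finite (Gp σ α B.V k) := inferInstance
  have h1 : (Set.range (fun z : (Fact σ α) × Gp σ α B.V k =>
    (⟨z.1.1, fun j => ((B.e (z.1.2 j), D.rho), z.2 * tau (Sum.inl (z.1.2 j)))⟩ :
      Fact σ ((B.V × Tag σ B.V D.K) × Gp σ α B.V k)))).Finite := Set.finite_range _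
  have h2 := ((D.Cr_fin.prod (Set.finite_univ (α := Gp σ α B.V k))).image (fun z =>
    (⟨z.1.1, fun j => (z.1.2 j, z.2 * tau (Sum.inr ⟨⟨z.1.1, fun i => (z.1.2 i).1⟩, j⟩))⟩ :
      Fact σ ((B.V × Tag σ B.V D.K) × Gp σ α B.V k))))
  refine (h1.union h2).subset ?_
  rintro ⟨R, F⟩ hF
  rw [mem_I2] at hF
  obtain (⟨t, g, h3, h4⟩ | ⟨f, g, h3, h4⟩) := hF
  · subst h4
    exact Or.inl ⟨(⟨R, t⟩, g), rfl⟩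
  · subst h4
    exact Or.inr ⟨(⟨R, f⟩, g), ⟨h3, trivial⟩, rfl⟩

theorem I2_occ {B : Base E I n} (D : Fdc B) (k : ℕ) (p : σ.Pos) (w) (g : Gp σ α B.V k) :
    occursAt (I2 D k) p (w, g) ↔ occursAt D.I1 p w := by
  constructor
  · rintro ⟨F, hF, h5⟩
    rw [mem_I2] at hF
    obtain (⟨t, g', h3, h4⟩ | ⟨f, g', h3, h4⟩) := hF
    · subst h4
      exact ⟨_, (mem_I1 D _ _).2 (Or.inl ⟨t, h3, rfl⟩), congrArg Prod.fst h5⟩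
    · subst h4
      exact ⟨_, Or.inr h3, congrArg Prod.fst h5⟩
  · rintro ⟨F, hF, h5⟩
    rw [mem_I1] at hF
    obtain (⟨t, h3, h4⟩ | h3) := hF
    · subst h4
      refine ⟨_, (mem_I2 D k _ _).2 (Or.inl ⟨t, g * tau (Sum.inl (t p.2)), h3, rfl⟩), ?_⟩
      simp only [mul_assoc, tau_mul_self, mul_one]
      rw [← h5]
    · refine ⟨_, (mem_I2 D k _ _).2 (Or.inr ⟨F, g * tau (Sum.inr ⟨⟨p.1, fun i => (F i).1⟩, p.2⟩), h3, rfl⟩), ?_⟩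
      simp only [mul_assoc, tau_mul_self, mul_one]
      rw [← h5]

theorem I2_fd {B : Base E I n} (D : Fdc B) (k : ℕ) (R : σ.Rel) (L : Set (Fin (σ.ar R)))
    (r : Fin (σ.ar R)) (hL : L.Nonempty) (hcl : ∀ d, (∀ l ∈ L, E.fd R d l) → E.fd R d r)
    (hI : ∀ t u : Fin (σ.ar R) → α, (⟨R, t⟩ : Fact σ α) ∈ I → (⟨R, u⟩ : Fact σ α) ∈ I →
      (∀ l ∈ L, t l = u l) → t r = u r) :
    ∀ t u, (⟨R, t⟩ : Fact σ _) ∈ I2 D k → (⟨R, u⟩ : Fact σ _) ∈ I2 D k →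
      (∀ l ∈ L, t l = u l) → t r = u r := by
  obtain ⟨l0, hl0⟩ := hL
  intro F F' hF hF' h
  rw [mem_I2] at hF hF'
  obtain (⟨t, g, h1, h2⟩ | ⟨f, g, h1, h2⟩) := hF <;>
    obtain (⟨t', g', h1', h2'⟩ | ⟨f', g', h1', h2'⟩) := hF'
  · subst h2 h2'
    have h3 : ∀ l ∈ L, t l = t' l := fun l hl =>
      B.e_inj (congrArg (fun z => z.1.1) (h l hl))
    have h4 := congrArg Prod.snd (h l0 hl0)
    simp only [h3 l0 hl0] at h4
    have h5 := mul_right_cancel h4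
    simp only [hI t t' h1 h1' h3, h5]
  · subst h2 h2'
    exact absurd (congrArg Prod.fst (h l0 hl0)).symm (D.not_share h1' h1 l0)
  · subst h2 h2'
    exact absurd (congrArg Prod.fst (h l0 hl0)) (D.not_share h1 h1' l0)
  · subst h2 h2'
    have h3 : ∀ l ∈ L, f l = f' l := fun l hl => congrArg Prod.fst (h l hl)
    have h6 := D.share_fst h1 h1' (h3 l0 hl0)
    have h7 : ∀ j : Fin (σ.ar R), (tau (Sum.inr ⟨⟨R, fun i => (f i).1⟩, j⟩) : Gp σ α B.V k) =
        tau (Sum.inr ⟨⟨R, fun i => (f' i).1⟩, j⟩) := fun j =>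
      congrArg (fun z => (tau (Sum.inr ⟨⟨R, z⟩, j⟩) : Gp σ α B.V k)) h6
    have h4 : g * tau (Sum.inr ⟨⟨R, fun i => (f i).1⟩, l0⟩) =
      g' * tau (Sum.inr ⟨⟨R, fun i => (f' i).1⟩, l0⟩) := congrArg Prod.snd (h l0 hl0)
    rw [h7] at h4
    have h5 := mul_right_cancel h4
    exact Prod.ext (D.fd_ok h1 h1' ⟨l0, hl0⟩ hcl h3) (by rw [h5]; exact congrArg (fun z => g' * z) (h7 r))

theorem I2_sound {B : Base E I n} (D : Fdc B) (k : ℕ) (hkn : k ≤ n) (M : Inst σ ℕ) (cc : α → ℕ)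
    (hM : ∀ R (t : Fin (σ.ar R) → α), (⟨R, t⟩ : Fact σ α) ∈ I →
      (⟨R, fun j => cc (t j)⟩ : Fact σ ℕ) ∈ M)
    (hU : ∀ p q u, E.le p q → occursAt M p u → occursAt M q u)
    (q : CQ σ) (hq : q.size ≤ k) (h : satCQ (I2 D k) q) : satCQ M q := by
  obtain ⟨h0, hh⟩ := h
  obtain ⟨S, S1, S2, S3, S4, S5⟩ := B.sim M cc hM hU
  have hP : ∀ A : Fact σ (Fin q.nv), ∃ ε : Option (Fact σ B.V) × Gp σ α B.V k, A ∈ q.atoms →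
      ((∃ t, (⟨A.1, t⟩ : Fact σ α) ∈ I ∧ ε.1 = none ∧
        ∀ j, h0 (A.2 j) = ((B.e (t j), D.rho), ε.2 * tau (Sum.inl (t j)))) ∨
      (∃ f, (⟨A.1, f⟩ : Fact σ _) ∈ D.Cr ∧ ε.1 = some ⟨A.1, fun i => (f i).1⟩ ∧
        ∀ j, h0 (A.2 j) = (f j, ε.2 * tau (Sum.inr ⟨⟨A.1, fun i => (f i).1⟩, j⟩)))) := by
    intro A
    by_cases hA : A ∈ q.atoms
    · rcases hh A hA with ⟨t, g, h1, h2⟩ | ⟨f, g, h1, h2⟩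
      · exact ⟨(none, g), fun _ => Or.inl ⟨t, h1, rfl, fun j => congrFun h2 j⟩⟩
      · exact ⟨(some ⟨A.1, fun i => (f i).1⟩, g), fun _ => Or.inr ⟨f, h1, rfl, fun j => congrFun h2 j⟩⟩
    · exact ⟨(none, 1), fun h => absurd h hA⟩
  choose ed hed using hP
  let Φ := (q.atoms.map ed).toFinset
  have hΦ : Φ.card ≤ k := (List.toFinset_card_le _).trans (by rw [List.length_map]; exact hq)
  obtain ⟨h, hl, hr⟩ := realize B k hkn M cc S S1 S2 S3 S4 S5 Φ.card Φ rfl hΦ (by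
    intro ε hε F hF
    simp only [Φ, List.mem_toFinset, List.mem_map] at hε
    obtain ⟨A, hA, rfl⟩ := hε
    rcases hed A hA with ⟨t, h1, h2, h3⟩ | ⟨f, h1, h2, h3⟩
    · rw [h2] at hF; simp at hF
    · rw [h2, Option.some.injEq] at hF
      rw [← hF]
      exact D.proj h1)
  refine ⟨fun x => h ((h0 x).1.1, (h0 x).2), fun A hA => ?_⟩
  have hr := hr (ed A) (by simp only [Φ, List.mem_toFinset, List.mem_map]; exact ⟨A, hA, rfl⟩)
  rcases hed A hA with ⟨t, h1, h2, h3⟩ | ⟨f, h1, h2, h3⟩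
  · simp only [h3, hr.2 h2]
    exact hM _ _ h1
  · simp only [h3]
    exact hr.1 _ h2

theorem m4 {σ : Sig} (E : Env σ) {α : Type} [Finite α] (I : Inst σ α)
    (hfd : ∀ R i j, E.fd R i j → ∀ t u : Fin (σ.ar R) → α, (⟨R, t⟩ : Fact σ α) ∈ I →
      (⟨R, u⟩ : Fact σ α) ∈ I → t i = u i → t j = u j) (k : ℕ) :
    ∃ (W : Type) (X : Inst σ W) (e : α → W), Function.Injective e ∧ X.Finite ∧
      (∀ R (t : Fin (σ.ar R) → α), (⟨R, t⟩ : Fact σ α) ∈ I →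
        (⟨R, fun j => e (t j)⟩ : Fact σ W) ∈ X) ∧
      (∀ p q u, E.le p q → occursAt X p u → occursAt X q u) ∧
      (∀ (R : σ.Rel) (L : Set (Fin (σ.ar R))) (r : Fin (σ.ar R)), L.Nonempty →
        (∀ d, (∀ l ∈ L, E.fd R d l) → E.fd R d r) →
        (∀ t u : Fin (σ.ar R) → α, (⟨R, t⟩ : Fact σ α) ∈ I → (⟨R, u⟩ : Fact σ α) ∈ I →
          (∀ l ∈ L, t l = u l) → t r = u r) →
        ∀ t u, (⟨R, t⟩ : Fact σ W) ∈ X → (⟨R, u⟩ : Fact σ W) ∈ X →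
          (∀ l ∈ L, t l = u l) → t r = u r) ∧
      (∀ (M : Inst σ ℕ) (cc : α → ℕ),
        (∀ R (t : Fin (σ.ar R) → α), (⟨R, t⟩ : Fact σ α) ∈ I →
          (⟨R, fun j => cc (t j)⟩ : Fact σ ℕ) ∈ M) →
        (∀ p q u, E.le p q → occursAt M p u → occursAt M q u) →
        ∀ q : CQ σ, q.size ≤ k → satCQ X q → satCQ M q) := by
  obtain ⟨B⟩ := exists_base E I hfd k
  obtain ⟨D⟩ := exists_fdc B
  refine ⟨_, I2 D k, fun a => ((B.e a, D.rho), 1 * tau (Sum.inl a)), ?_, I2_fin D k, ?_, ?_,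
    fun R L r hL hcl hI => I2_fd D k R L r hL hcl hI,
    fun M cc hM hU q hq h => I2_sound D k le_rfl M cc hM hU q hq h⟩
  · intro a b h
    exact B.e_inj (congrArg (fun z => z.1.1) h)
  · intro R t h
    exact Or.inl ⟨t, 1, h, rfl⟩
  · rintro p q ⟨w, g⟩ h h1
    rw [I2_occ] at h1 ⊢
    exact D.uid h h1

end M4b
end FQA

namespace FQA
section M0
open Classical
variable {σ : Sig}

theorem occ_fin {I : Inst σ ℕ} (hI : I.Finite) (p : σ.Pos) : {a | occursAt I p a}.Finite := by
  refine (hI.biUnion (t := fun F => Set.range F.2) fun F _ => Set.finite_range F.2).subset ?_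
  rintro a ⟨t, h1, h2⟩
  exact Set.mem_biUnion h1 ⟨p.2, h2⟩

theorem fd_map {I : Inst σ ℕ} {R : σ.Rel} {i j : Fin (σ.ar R)}
    (h : ∀ t u : Fin (σ.ar R) → ℕ, (⟨R, t⟩ : Fact σ ℕ) ∈ I → (⟨R, u⟩ : Fact σ ℕ) ∈ I →
      t i = u i → t j = u j) :
    ∃ g : ℕ → ℕ, (∀ t : Fin (σ.ar R) → ℕ, (⟨R, t⟩ : Fact σ ℕ) ∈ I → g (t i) = t j) ∧
      g '' {a | occursAt I ⟨R, i⟩ a} = {a | occursAt I ⟨R, j⟩ a} := by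
  have h1 : ∃ g : ℕ → ℕ, ∀ t : Fin (σ.ar R) → ℕ, (⟨R, t⟩ : Fact σ ℕ) ∈ I → g (t i) = t j := by
    refine ⟨fun a => if h : occursAt I ⟨R, i⟩ a then h.choose j else 0, fun t ht => ?_⟩
    have hx : occursAt I ⟨R, i⟩ (t i) := ⟨t, ht, rfl⟩
    simp only [dif_pos hx]
    exact h _ _ hx.choose_spec.1 ht hx.choose_spec.2
  obtain ⟨g, hg⟩ := h1
  refine ⟨g, hg, ?_⟩
  ext a
  constructor
  · rintro ⟨b, ⟨t, h2, rfl⟩, rfl⟩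
    exact ⟨t, h2, (hg t h2).symm⟩
  · rintro ⟨t, h2, rfl⟩
    exact ⟨t i, ⟨t, h2, rfl⟩, hg t h2⟩

def sq (Su : Set (UID σ)) (Sf : Set (FD σ)) (p q : σ.Pos) : Prop :=
  ∀ I : Inst σ ℕ, I.Finite → satAllC I Su Sf →
    {a | occursAt I p a}.ncard ≤ {a | occursAt I q a}.ncard

theorem sq_rank {Su : Set (UID σ)} {Sf : Set (FD σ)} {p q : σ.Pos} (h : sq Su Sf p q) :
    {r | sq Su Sf r p}.ncard ≤ {r | sq Su Sf r q}.ncard :=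
  Set.ncard_le_ncard (fun r hr I h1 h2 => (hr I h1 h2).trans (h I h1 h2)) (Set.toFinite _)

theorem sq_symm {Su : Set (UID σ)} {Sf : Set (FD σ)} {p q : σ.Pos} (h : sq Su Sf p q)
    (h' : {r | sq Su Sf r q}.ncard ≤ {r | sq Su Sf r p}.ncard) : sq Su Sf q p := by
  have h1 : {r | sq Su Sf r p} = {r | sq Su Sf r q} := Set.eq_of_subset_of_ncard_le
    (fun r (hr : sq Su Sf r p) I h1 h2 => (hr I h1 h2).trans (h I h1 h2) :
      {r | sq Su Sf r p} ⊆ {r | sq Su Sf r q}) h' (Set.toFinite _)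
  have h2 : q ∈ {r | sq Su Sf r q} := fun I _ _ => le_rfl
  rw [← h1] at h2
  exact h2

noncomputable def mkEnv (Su : Set (UID σ)) (Sf : Set (FD σ)) : Env σ where
  le p q := ∀ I : Inst σ ℕ, I.Finite → satAllC I Su Sf → ∀ a, occursAt I p a → occursAt I q a
  le_refl p I _ _ a h := h
  le_trans h1 h2 I h3 h4 a h := h2 I h3 h4 a (h1 I h3 h4 a h)
  fd R i j := ∀ I : Inst σ ℕ, I.Finite → satAllC I Su Sf → ∀ t u : Fin (σ.ar R) → ℕ,
    (⟨R, t⟩ : Fact σ ℕ) ∈ I → (⟨R, u⟩ : Fact σ ℕ) ∈ I → t i = u i → t j = u j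
  fd_refl R i I _ _ t u _ _ h := h
  fd_trans h1 h2 I h3 h4 t u ht hu h := h2 I h3 h4 t u ht hu (h1 I h3 h4 t u ht hu h)
  rank p := {r | sq Su Sf r p}.ncard
  rank_le h := sq_rank fun I h1 h2 => Set.ncard_le_ncard (h I h1 h2) (occ_fin h1 _)
  le_symm {p q} h hr I h1 h2 a ha := by
    have h3 := sq_symm (fun I h1 h2 => Set.ncard_le_ncard (h I h1 h2) (occ_fin h1 _)) hr I h1 h2
    have h4 : {a | occursAt I p a} = {a | occursAt I q a} := Set.eq_of_subset_of_ncard_le (h I h1 h2 : {a | occursAt I p a} ⊆ _) h3 (occ_fin h1 _)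
    have h5 : a ∈ {a | occursAt I q a} := ha
    rw [← h4] at h5
    exact h5
  rank_fd h := sq_rank fun I h1 h2 => by
    obtain ⟨g, h3, h4⟩ := fd_map (h I h1 h2)
    rw [← h4]
    exact Set.ncard_image_le (occ_fin h1 _)
  fd_symm {R i j} h hr I h1 h2 t u ht hu he := by
    have h0 : sq Su Sf ⟨R, j⟩ ⟨R, i⟩ := fun I h1 h2 => by
      obtain ⟨g, h3, h4⟩ := fd_map (h I h1 h2)
      rw [← h4]
      exact Set.ncard_image_le (occ_fin h1 _)
    have h5 := le_antisymm (h0 I h1 h2) (sq_symm h0 hr I h1 h2)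
    obtain ⟨g, h3, h4⟩ := fd_map (h I h1 h2)
    rw [← h4] at h5
    have h6 := Set.injOn_of_ncard_image_eq h5 (occ_fin h1 _)
    exact h6 ⟨t, ht, rfl⟩ ⟨u, hu, rfl⟩ (by rw [h3 t ht, h3 u hu, he])

end M0

section M5
open Classical

theorem core {σ : Sig} (Su : Set (UID σ)) (Sf : Set (FD σ))
    (hclU : ∀ τ, finImpUID Su Sf τ → τ ∈ Su) (hclF : ∀ φ, finImpFD Su Sf φ → φ ∈ Sf) (k : ℕ)
    (I₀ : Inst σ ℕ) (hfin : I₀.Finite) (hI₀ : ∀ φ ∈ Sf, satFD I₀ φ) :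
    ∃ I : Inst σ ℕ, I₀ ⊆ I ∧ I.Finite ∧ satAllC I Su Sf ∧
      ∀ q : CQ σ, q.size ≤ k → satCQ I q → unrEntails I₀ Su Sf q := by
  obtain ⟨n, hn⟩ : ∃ n, ∀ F ∈ I₀, ∀ i, F.2 i < n := by
    obtain ⟨b, hb⟩ := (hfin.biUnion (t := fun F => Set.range F.2)
      fun F _ => Set.finite_range F.2).bddAbove
    exact ⟨b + 1, fun F hF i => Nat.lt_succ_of_le (hb (Set.mem_biUnion hF ⟨i, rfl⟩))⟩
  let J : Inst σ (Fin n) := {F | (⟨F.1, fun i => (F.2 i : ℕ)⟩ : Fact σ ℕ) ∈ I₀}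
  obtain ⟨W, X, e, he, hX, heX, hU, hF, hS⟩ := m4 (mkEnv Su Sf) J (by
    intro R i j h t u ht hu htu
    by_cases hij : i = j
    · rw [← hij]; exact htu
    have h1 : (⟨R, {i}, j, ⟨i, rfl⟩, fun h => hij h.symm⟩ : FD σ) ∈ Sf := by
      apply hclF
      intro I h1 h2 t u ht hu h3
      exact h I h1 h2 t u ht hu (h3 i rfl)
    have h2 := hI₀ _ h1 _ _ ht hu (by
      intro l hl
      rw [Set.mem_singleton_iff] at hl
      rw [hl]
      exact congrArg Fin.val htu)
    exact Fin.ext h2) k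
  -- transfer
  have hD : (⋃ F ∈ X, Set.range F.2).Finite :=
    hX.biUnion (t := fun F => Set.range F.2) fun F _ => Set.finite_range F.2
  obtain ⟨m, hm1, hm2⟩ : ∃ m : W → ℕ, (∀ a, m (e a) = a) ∧
      Set.InjOn m (⋃ F ∈ X, Set.range F.2) := by
    obtain ⟨g, hg⟩ := Set.countable_iff_exists_injOn.1 hD.countable
    refine ⟨fun w => if h : ∃ a, e a = w then (h.choose : Fin n) else n + g w, ?_, ?_⟩
    · intro a
      have hx : ∃ b, e b = e a := ⟨a, rfl⟩
      simp only [dif_pos hx]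
      rw [he hx.choose_spec]
    · intro w hw w' hw' h
      simp only at h
      split_ifs at h with h1 h2 h2
      · rw [← h1.choose_spec, ← h2.choose_spec, Fin.ext h]
      · have := h1.choose.2
        omega
      · have := h2.choose.2
        omega
      · exact hg hw hw' (by omega)
  let Y : Inst σ ℕ := (fun F : Fact σ W => (⟨F.1, fun i => m (F.2 i)⟩ : Fact σ ℕ)) '' X
  have hY : ∀ R (t : Fin (σ.ar R) → ℕ), (⟨R, t⟩ : Fact σ ℕ) ∈ Y →
      ∃ s : Fin (σ.ar R) → W, (⟨R, s⟩ : Fact σ W) ∈ X ∧ t = fun i => m (s i) := by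
    rintro R t ⟨⟨R', s⟩, hs, h⟩
    simp only at h
    obtain ⟨rfl, h⟩ := Sigma.mk.inj h
    exact ⟨s, hs, (eq_of_heq h).symm⟩
  have hmem : ∀ {R} {s : Fin (σ.ar R) → W}, (⟨R, s⟩ : Fact σ W) ∈ X → ∀ i,
      s i ∈ ⋃ F ∈ X, Set.range F.2 := fun {R s} hs i =>
    Set.mem_biUnion (x := (⟨R, s⟩ : Fact σ W)) hs ⟨i, rfl⟩
  refine ⟨Y, ?_, hX.image _, ⟨?_, ?_⟩, ?_⟩
  · rintro ⟨R, t⟩ ht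
    refine ⟨⟨R, fun j => e ⟨t j, hn _ ht j⟩⟩, heX R (fun j => ⟨t j, hn _ ht j⟩) ht, ?_⟩
    simp only [hm1]
  · rintro τ hτ a ⟨t, ht, rfl⟩
    obtain ⟨s, hs, rfl⟩ := hY _ _ ht
    obtain ⟨s', hs', h'⟩ := hU τ.src τ.dst (s τ.src.2) (fun I _ h2 a ha => h2.1 τ hτ a ha)
      ⟨s, hs, rfl⟩
    exact ⟨_, ⟨_, hs', rfl⟩, congrArg m h'⟩
  · intro φ hφ t u ht hu h
    obtain ⟨s, hs, rfl⟩ := hY _ _ ht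
    obtain ⟨s', hs', rfl⟩ := hY _ _ hu
    refine congrArg m (hF φ.rel φ.lhs φ.rhs φ.lhs_nonempty ?_ ?_ s s' hs hs' ?_)
    · intro d hd I h1 h2 t u ht hu htu
      exact h2.2 φ hφ t u ht hu fun l hl => hd l hl I h1 h2 t u ht hu htu
    · intro t u ht hu htu
      exact Fin.ext (hI₀ φ hφ _ _ ht hu fun l hl => congrArg Fin.val (htu l hl))
    · intro l hl
      exact hm2 (hmem hs l) (hmem hs' l) (h l hl)
  · intro q hq hsat M hM hMS
    refine hS M Fin.val (fun R t ht => hM ht) ?_ q hq ?_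
    · intro p q u hpq hp
      by_cases hne : p = q
      · rw [← hne]; exact hp
      · exact hMS.1 ⟨p, q, hne⟩ (hclU _ hpq) u hp
    · obtain ⟨h, hh⟩ := hsat
      have hv : ∀ x, ∃ w ∈ ⋃ F ∈ X, Set.range F.2, m w = h x := by
        intro x
        obtain ⟨A, hA, i, rfl⟩ := q.vars_occur x
        obtain ⟨s, hs, h1⟩ := hY _ _ (hh A hA)
        exact ⟨s i, hmem hs i, (congrFun h1 i).symm⟩
      choose w hw1 hw2 using hv
      refine ⟨w, fun A hA => ?_⟩
      obtain ⟨s, hs, h1⟩ := hY _ _ (hh A hA)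
      have h2 : (fun i => w (A.2 i)) = s := by
        funext i
        refine hm2 (hw1 _) (hmem hs i) ?_
        rw [hw2]
        exact congrFun h1 i
      rw [h2]
      exact hs
end M5
end FQA

namespace FQA
/-- **Universal Models Theorem.** If `Σ = Su ∪ Sf` (UIDs and FDs) is closed under
finite implication, `k ∈ ℕ`, and `I₀` is a finite instance satisfying the FDs `Sf`,
then `I₀` has a finite superinstance that satisfies `Σ` and is `k`-sound for `Σ`,
`I₀`, and the class of all Boolean CQs. -/
theorem universal_models
    {σ : Sig} (Su : Set (UID σ)) (Sf : Set (FD σ))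
    (hSu : Su.Finite) (hSf : Sf.Finite)
    (hclU : ∀ τ : UID σ, finImpUID Su Sf τ → τ ∈ Su)
    (hclF : ∀ φ : FD σ, finImpFD Su Sf φ → φ ∈ Sf)
    (k : ℕ) (I₀ : Inst σ ℕ) (hI₀fin : I₀.Finite)
    (hI₀fd : ∀ φ ∈ Sf, satFD I₀ φ) :
    ∃ I : Inst σ ℕ, I₀ ⊆ I ∧ I.Finite ∧ satAllC I Su Sf ∧
      ∀ q : CQ σ, q.size ≤ k → satCQ I q → unrEntails I₀ Su Sf q := by
  exact core Su Sf hclU hclF k I₀ hI₀fin hI₀fd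

end FQA
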